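/- arXiv:2106.15704 — 5 statements merged into one kernel-verified Lean document; each statement's English description precedes it below -/
import Mathlib

section
/- Let u, α, ν be real numbers with u > 0, α > 0 and ν ≥ 0. Then ∫₀^∞ e^{−ut} t^{α−1} J_ν(t) dt = ( (1/2)^ν Γ(α+ν) / ( (1+u²)^{(α+ν)/2} Γ(ν+1) ) ) · ₂F₁( (α+ν)/2, (1−α+ν)/2 ; 1+ν ; 1/(1+u²) ). -/
/-!
Write `a = (α + ν) / 2` and `b = (1 - α + ν) / 2`, so that `1 + ν - b = a + 1 / 2`.

For large `u` the series of `besselJ` can be integrated term by term against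
`exp (-u t) t ^ (α - 1)` (`integral_eq_of_large`); the Gamma integrals and the duplication formula
`(2a)_{2l} = 4 ^ l (a)_l (a + 1/2)_l` give a multiple of `₂F₁(a, a + 1/2; 1 + ν; -1 / u ^ 2)`.
Pfaff's transformation (`pfaff`), proved for small arguments from the binomial series and the
Chu–Vandermonde identity, turns this into `₂F₁(a, b; 1 + ν; 1 / (1 + u ^ 2))`.

Both sides are real analytic in `u > 0`, so the identity extends to all `u > 0`. For the right-hand
side this is the radius of convergence of the hypergeometric series (`analyticOnNhd_hyp2F1`). For
the left-hand side, Poisson's integral representation (`hasSum_besselTerm`) yields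
`|J_ν(t)| ≤ (t / 2) ^ ν / Γ(ν + 1)`; hence the integral is the difference of the Laplace transforms
of two positive measures, which are moment generating functions finite on the whole half-line
(`analyticOnNhd_integral`).
-/

/-- The Bessel function of the first kind of order `ν`, defined for `t ≥ 0` by its
power series `J_ν(t) = ∑_{l=0}^∞ (−1)^l (t/2)^{ν+2l} / (l! Γ(l+ν+1))`. -/
noncomputable def besselJ (ν t : ℝ) : ℝ :=
  ∑' l : ℕ, ((-1 : ℝ) ^ l * (t / 2) ^ (ν + 2 * l)) / (l.factorial * Real.Gamma (l + ν + 1))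

/-- The Gauss hypergeometric function `₂F₁(ξ, ζ; η; z)` defined by its power series
`∑_{l=0}^∞ (ξ)_l (ζ)_l / ((η)_l l!) z^l`, where `(ξ)_l` is the ascending Pochhammer symbol. -/
noncomputable def hyp2F1 (ξ ζ η z : ℝ) : ℝ :=
  ∑' l : ℕ, ((ascPochhammer ℝ l).eval ξ * (ascPochhammer ℝ l).eval ζ)
      / ((ascPochhammer ℝ l).eval η * l.factorial) * z ^ l

open MeasureTheory Set

/-! ### Rising factorials -/

/-- The rising factorial `(a)_n`. -/
noncomputable abbrev poch (a : ℝ) (n : ℕ) : ℝ := (ascPochhammer ℝ n).eval a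

lemma poch_zero (a : ℝ) : poch a 0 = 1 := by simp [poch]

lemma poch_succ (a : ℝ) (n : ℕ) : poch a (n + 1) = poch a n * (a + n) :=
  ascPochhammer_succ_eval n a

lemma poch_succ_left (a : ℝ) (n : ℕ) : poch a (n + 1) = a * poch (a + 1) n := by
  simp [poch, ascPochhammer_succ_left]

lemma poch_pos {a : ℝ} (ha : 0 < a) (n : ℕ) : 0 < poch a n := ascPochhammer_pos n a ha

lemma poch_add (a : ℝ) (k j : ℕ) : poch a (k + j) = poch a k * poch (a + k) j := by
  induction j with
  | zero => simp [poch_zero]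
  | succ j ih => rw [← add_assoc, poch_succ, ih, poch_succ]; push_cast; ring

lemma poch_one (n : ℕ) : poch 1 n = n.factorial := by simp [poch]

lemma Gamma_add_nat {a : ℝ} (ha : 0 < a) (n : ℕ) :
    Real.Gamma (a + n) = poch a n * Real.Gamma a := by
  induction n with
  | zero => simp [poch_zero]
  | succ n ih =>
    push_cast
    rw [← add_assoc, Real.Gamma_add_one (by positivity), ih, poch_succ]; ring

/-- Duplication formula for rising factorials. -/
lemma poch_two_mul (a : ℝ) (n : ℕ) :
    poch (2 * a) (2 * n) = 4 ^ n * poch a n * poch (a + 1 / 2) n := by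
  induction n with
  | zero => simp [poch_zero]
  | succ n ih =>
    rw [show 2 * (n + 1) = 2 * n + 1 + 1 by ring, poch_succ, poch_succ, ih, poch_succ, poch_succ]
    push_cast; ring

/-- A crude geometric bound, sufficient for absolute convergence near the origin. -/
lemma abs_poch_le {b c : ℝ} (hc : 1 ≤ c) (n : ℕ) :
    |poch b n| ≤ (|b| + 1) ^ n * poch c n := by
  induction n with
  | zero => simp [poch_zero]
  | succ n ih =>
    rw [poch_succ, poch_succ, abs_mul, pow_succ]
    have h1 : |b + n| ≤ (|b| + 1) * (c + n) := by
      have h2 := abs_add_le b n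
      have h3 : |(n : ℝ)| = n := abs_of_nonneg (by positivity)
      have h4 := abs_nonneg b
      have h5 : (0 : ℝ) ≤ n := by positivity
      nlinarith [mul_nonneg h4 h5, mul_nonneg h4 (sub_nonneg.2 hc)]
    have := mul_le_mul ih h1 (abs_nonneg _) ((abs_nonneg _).trans ih)
    linarith

open Finset in
/-- The Chu–Vandermonde identity. -/
lemma chu_vandermonde (n : ℕ) : ∀ {b c : ℝ}, 0 < c →
    ∑ p ∈ antidiagonal n, (n.choose p.1 : ℝ) * ((-1) ^ p.1 * (poch b p.1 / poch c p.1)) =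
      poch (c - b) n / poch c n := by
  induction n with
  | zero => intro b c hc; simp [poch_zero]
  | succ n ih =>
    intro b c hc
    rw [Finset.sum_antidiagonal_choose_succ_mul
      (fun k _ => (-1 : ℝ) ^ k * (poch b k / poch c k)), ih hc]
    have h : ∀ p ∈ antidiagonal n,
        (n.choose p.2 : ℝ) * ((-1) ^ (p.1 + 1) * (poch b (p.1 + 1) / poch c (p.1 + 1))) =
        -(b / c) * ((n.choose p.1 : ℝ) *
          ((-1) ^ p.1 * (poch (b + 1) p.1 / poch (c + 1) p.1))) := by
      intro p hp
      rw [HasAntidiagonal.mem_antidiagonal] at hp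
      rw [Nat.choose_symm_of_eq_add hp.symm, poch_succ_left, poch_succ_left, mul_div_mul_comm]
      ring
    rw [Finset.sum_congr rfl h, ← Finset.mul_sum, ih (by positivity : 0 < c + 1)]
    have e : c * poch (c + 1) n = poch c n * (c + n) := by rw [← poch_succ_left, poch_succ]
    have h1 := poch_pos hc n
    have h2 : poch (c + 1) n = poch c n * (c + n) / c := by field_simp; linarith
    rw [h2, poch_succ, poch_succ, add_sub_add_right_eq_sub]
    have : c + n ≠ 0 := by positivity
    field_simp
    ring

/-- The binomial series, with the coefficients of `(1 + x) ^ (-a)` as rising factorials. -/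
lemma hasSum_one_add_rpow (a : ℝ) {x : ℝ} (hx : |x| < 1) :
    HasSum (fun j : ℕ => poch a j / j.factorial * (-x) ^ j) ((1 + x) ^ (-a)) := by
  have h := (Real.one_add_rpow_hasFPowerSeriesOnBall_zero (a := -a)).hasSum (y := x)
    (by simpa [enorm_eq_nnnorm, ← NNReal.coe_lt_coe] using hx)
  rw [binomialSeries_eq_ordinaryHypergeometricSeries (b := (1 : ℝ))
    (by intro k; have : (0 : ℝ) ≤ k := by positivity
        linarith)] at h
  simp only [zero_add] at h
  refine h.congr_fun fun j => ?_
  have : poch 1 j ≠ 0 := (poch_pos one_pos j).ne'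
  have h3 := ordinaryHypergeometricSeries_apply_eq (𝔸 := ℝ) a (1:ℝ) 1 (-x) j
  simp only [FormalMultilinearSeries.compContinuousLinearMap_apply, Function.comp_def, neg_neg]
  simp at h3 ⊢
  rw [h3]
  field_simp

/-! ### Pfaff's transformation -/

/-- Absolute convergence of the double series behind Pfaff's transformation. -/
lemma summable_pfaff {a b c x : ℝ} (ha : 0 < a) (hc : 1 ≤ c) (hx0 : 0 ≤ x)
    (hx : 2 * (a + 1) * (|b| + 1) * x < 1) :
    Summable (fun p : ℕ × ℕ => poch a (p.1 + p.2) * poch b p.1 /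
      (poch c p.1 * p.1.factorial * p.2.factorial) * x ^ p.1 * (-x) ^ p.2) := by
  have hb := abs_nonneg b
  have hx2 : 2 * (a + 1) * x < 1 := by
    refine lt_of_le_of_lt ?_ hx
    have : 0 ≤ 2 * (a + 1) * x := by positivity
    nlinarith
  have hs := (summable_geometric_of_lt_one (by positivity) hx).mul_of_nonneg
    (summable_geometric_of_lt_one (by positivity) hx2)
    (fun _ => by positivity) (fun _ => by positivity)
  refine Summable.of_norm_bounded hs ?_
  rintro ⟨k, j⟩
  have hck := poch_pos (zero_lt_one.trans_le hc) k
  have h1 : poch a (k + j) ≤ (a + 1) ^ (k + j) * (2 ^ (k + j) * (k.factorial * j.factorial)) := by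
    have := abs_poch_le (b := a) (le_refl (1 : ℝ)) (k + j)
    rw [abs_of_pos (poch_pos ha _), abs_of_pos ha, poch_one] at this
    refine this.trans (mul_le_mul_of_nonneg_left ?_ (by positivity))
    have h2 := Nat.add_choose_mul_factorial_mul_factorial k j
    have h3 : ((k + j).choose j : ℝ) ≤ 2 ^ (k + j) := by
      exact_mod_cast Nat.choose_le_two_pow (k + j) j
    rw [← h2]; push_cast; rw [mul_assoc]
    gcongr
  have h2 := abs_poch_le (b := b) hc k
  simp only [Real.norm_eq_abs]
  rw [abs_mul, abs_mul, abs_div, abs_mul, abs_pow, abs_pow, abs_neg, abs_of_nonneg hx0,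
    abs_of_pos (poch_pos ha _), abs_of_pos (by positivity : 0 < poch c k * k.factorial * j.factorial)]
  calc _ ≤ (a + 1) ^ (k + j) * (2 ^ (k + j) * (k.factorial * j.factorial)) *
        ((|b| + 1) ^ k * poch c k) / (poch c k * k.factorial * j.factorial) * x ^ k * x ^ j := by
        gcongr
    _ = _ := by
        simp only [mul_pow, pow_add]
        field_simp

/-- Pfaff's transformation of `₂F₁`, near the origin: expand `(1 + x) ^ (-(a + k))` in each term of
the left-hand side and collect powers of `x` by the Chu–Vandermonde identity. -/
lemma pfaff {a b c x : ℝ} (ha : 0 < a) (hc : 1 ≤ c) (hx0 : 0 ≤ x)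
    (hx : 2 * (a + 1) * (|b| + 1) * x < 1) :
    (1 + x) ^ (-a) * ∑' k : ℕ, poch a k * poch b k / (poch c k * k.factorial) * (x / (1 + x)) ^ k =
      ∑' n : ℕ, poch a n * poch (c - b) n / (poch c n * n.factorial) * (-x) ^ n := by
  have hs := summable_pfaff ha hc hx0 hx
  have hx1 : |x| < 1 := by
    rw [abs_of_nonneg hx0]
    refine lt_of_le_of_lt ?_ hx
    have := mul_nonneg (abs_nonneg b) hx0
    have h2 := mul_nonneg ha.le this
    have h3 := mul_nonneg ha.le hx0
    nlinarith
  have hrow : ∀ k : ℕ, ∑' j : ℕ, poch a (k + j) * poch b k /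
      (poch c k * k.factorial * j.factorial) * x ^ k * (-x) ^ j =
      (1 + x) ^ (-a) * (poch a k * poch b k / (poch c k * k.factorial) * (x / (1 + x)) ^ k) := by
    intro k
    have h := ((hasSum_one_add_rpow (a + k) hx1).mul_left
      (poch a k * poch b k / (poch c k * k.factorial) * x ^ k)).tsum_eq
    rw [show -(a + k) = -a - k by ring, Real.rpow_sub_natCast (by positivity)] at h
    rw [show (1 + x) ^ (-a) * (poch a k * poch b k / (poch c k * k.factorial) * (x / (1 + x)) ^ k) =
      poch a k * poch b k / (poch c k * k.factorial) * x ^ k * ((1 + x) ^ (-a) / (1 + x) ^ k) by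
        rw [div_pow]; ring, ← h]
    refine tsum_congr fun j => ?_
    rw [poch_add]
    have hck := (poch_pos (zero_lt_one.trans_le hc) k).ne'
    field_simp
  have hdiag : ∀ n : ℕ, ∑ p ∈ Finset.HasAntidiagonal.antidiagonal n, poch a (p.1 + p.2) * poch b p.1 /
      (poch c p.1 * p.1.factorial * p.2.factorial) * x ^ p.1 * (-x) ^ p.2 =
      poch a n * poch (c - b) n / (poch c n * n.factorial) * (-x) ^ n := by
    intro n
    have h := chu_vandermonde n (b := b) (zero_lt_one.trans_le hc)
    rw [show poch a n * poch (c - b) n / (poch c n * n.factorial) * (-x) ^ n =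
      poch a n / n.factorial * (-x) ^ n * (poch (c - b) n / poch c n) by ring, ← h, Finset.mul_sum]
    refine Finset.sum_congr rfl ?_
    rintro ⟨k, j⟩ hp
    rw [Finset.HasAntidiagonal.mem_antidiagonal] at hp
    simp only at hp ⊢
    subst hp
    rw [← Nat.add_choose_mul_factorial_mul_factorial k j,
      Nat.choose_symm_of_eq_add (rfl : k + j = k + j)]
    have hck := (poch_pos (zero_lt_one.trans_le hc) k).ne'
    have hch : ((k + j).choose j : ℝ) ≠ 0 := by
      exact_mod_cast (Nat.choose_pos (Nat.le_add_left j k)).ne'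
    rw [neg_pow x j, neg_pow x (k + j)]
    have h1 : ((-1 : ℝ) ^ (k + j)) * (-1) ^ k = (-1) ^ j := by
      rw [pow_add, mul_right_comm, ← mul_pow]; simp
    rw [← h1]
    push_cast
    field_simp
    ring
  rw [← tsum_mul_left]
  simp_rw [← hrow, ← hdiag]
  rw [← hs.tsum_prod]
  rw [← Finset.HasAntidiagonal.sigmaAntidiagonalEquivProd.tsum_eq]
  have hs' := Finset.HasAntidiagonal.sigmaAntidiagonalEquivProd.summable_iff.2 hs
  refine (Summable.tsum_sigma' (fun n => (hasSum_fintype _).summable) hs').trans ?_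
  refine tsum_congr fun n => ?_
  rw [tsum_fintype, ← Finset.sum_coe_sort (Finset.HasAntidiagonal.antidiagonal n)]
  rfl

/-! ### Analyticity of Laplace transforms and of the hypergeometric function -/

/-- The Laplace transform of a nonnegative density is analytic, being the moment generating
function of `t ↦ -t`. -/
lemma analyticOnNhd_laplace_of_nonneg {h : ℝ → ℝ} (hm : AEMeasurable h (volume.restrict (Ioi 0)))
    (h0 : ∀ t ∈ Ioi (0 : ℝ), 0 ≤ h t)
    (hi : ∀ u : ℝ, 0 < u → IntegrableOn (fun t => Real.exp (-u * t) * h t) (Ioi 0)) :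
    AnalyticOnNhd ℝ (fun u : ℝ => ∫ t in Ioi (0 : ℝ), Real.exp (-u * t) * h t) (Ioi 0) := by
  set μ : Measure ℝ := (volume.restrict (Ioi (0 : ℝ))).withDensity (fun t => ENNReal.ofReal (h t))
    with hμ
  have hsmul : ∀ u : ℝ, (fun t => (ENNReal.ofReal (h t)).toReal • Real.exp (u * (-t)))
      =ᵐ[volume.restrict (Ioi (0 : ℝ))] fun t => Real.exp (-u * t) * h t := by
    intro u
    filter_upwards [ae_restrict_mem measurableSet_Ioi] with t ht
    rw [ENNReal.toReal_ofReal (h0 t ht), smul_eq_mul, mul_comm, mul_neg, neg_mul]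
  have hmgf : (fun u : ℝ => ∫ t in Ioi (0 : ℝ), Real.exp (-u * t) * h t) =
      ProbabilityTheory.mgf (fun t => -t) μ := by
    funext u
    rw [ProbabilityTheory.mgf, hμ, integral_withDensity_eq_integral_toReal_smul₀
      hm.ennreal_ofReal (by simp)]
    exact (integral_congr_ae (hsmul u)).symm
  rw [hmgf]
  refine ProbabilityTheory.analyticOnNhd_mgf.mono (interior_maximal ?_ isOpen_Ioi)
  intro u hu
  rw [ProbabilityTheory.integrableExpSet, mem_ofPred_eq, hμ,
    integrable_withDensity_iff_integrable_smul₀' hm.ennreal_ofReal (by simp)]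
  exact (hi u hu).congr (hsmul u).symm

/-- Laplace transforms of signed densities dominated by `g` are analytic: write
`f = (f + g) - g`. -/
lemma analyticOnNhd_laplace {f g : ℝ → ℝ} (hf : AEMeasurable f (volume.restrict (Ioi 0)))
    (hg : AEMeasurable g (volume.restrict (Ioi 0)))
    (hfg : ∀ t ∈ Ioi (0 : ℝ), |f t| ≤ g t)
    (hi : ∀ u : ℝ, 0 < u → IntegrableOn (fun t => Real.exp (-u * t) * g t) (Ioi 0)) :
    AnalyticOnNhd ℝ (fun u : ℝ => ∫ t in Ioi (0 : ℝ), Real.exp (-u * t) * f t) (Ioi 0) := by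
  have hfi : ∀ u : ℝ, 0 < u → IntegrableOn (fun t => Real.exp (-u * t) * f t) (Ioi 0) := by
    intro u hu
    refine (hi u hu).mono' (AEMeasurable.aestronglyMeasurable (by fun_prop)) ?_
    filter_upwards [ae_restrict_mem measurableSet_Ioi] with t ht
    rw [norm_mul, Real.norm_of_nonneg (Real.exp_pos _).le]
    exact mul_le_mul_of_nonneg_left (hfg t ht) (Real.exp_pos _).le
  have h1 := analyticOnNhd_laplace_of_nonneg (hf.add hg)
    (fun t ht => by have := neg_abs_le (f t); have := hfg t ht; simp; linarith)
    (fun u hu => by simpa [mul_add] using! (hfi u hu).add (hi u hu))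
  have h2 := analyticOnNhd_laplace_of_nonneg hg
    (fun t ht => (abs_nonneg _).trans (hfg t ht)) hi
  refine (h1.sub h2).congr isOpen_Ioi ?_
  intro u hu
  simp only [Pi.sub_apply, Pi.add_apply, mul_add]
  rw [integral_add (hfi u hu) (hi u hu)]
  ring

/-- When `b` is a nonpositive integer the series terminates; otherwise its radius is `1`. -/
lemma analyticOnNhd_hyp2F1 {a b c : ℝ} (ha : 0 < a) (hc : 0 < c) :
    AnalyticOnNhd ℝ (hyp2F1 a b c) (Metric.ball 0 1) := by
  have hr : 1 ≤ (ordinaryHypergeometricSeries ℝ a b c).radius := by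
    by_cases hb : ∃ k : ℕ, (k : ℝ) = -b
    · obtain ⟨k, hk⟩ := hb
      obtain rfl : b = -(k : ℝ) := by linarith
      rw [ordinaryHypergeometric_radius_top_of_neg_nat₂]
      exact le_top
    · rw [ordinaryHypergeometricSeries_radius_eq_one]
      intro k
      have : (0 : ℝ) ≤ k := by positivity
      exact ⟨by linarith, fun h => hb ⟨k, h⟩, by linarith⟩
  have h := ((ordinaryHypergeometricSeries ℝ a b c).hasFPowerSeriesOnBall
    (zero_lt_one.trans_le hr)).analyticOnNhd
  have he : hyp2F1 a b c = (ordinaryHypergeometricSeries ℝ a b c).sum := by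
    funext z
    rw [ordinaryHypergeometric_sum_eq, hyp2F1]
    refine tsum_congr fun n => ?_
    rw [smul_eq_mul, div_eq_mul_inv, mul_inv]
    ring
  rw [he]
  refine h.mono fun z hz => ?_
  refine Metric.eball_subset_eball hr ?_
  simpa [edist_dist] using hz

/-! ### Poisson's representation of the Bessel function -/

/-- The terms of the series of `besselJ` without the factor `(t/2)^ν`:
`J_ν(t) = (t/2)^ν ∑ₗ besselTerm ν t l` for `t > 0`. -/
noncomputable def besselTerm (ν t : ℝ) (l : ℕ) : ℝ :=
  (-1) ^ l * (t / 2) ^ (2 * l) / (l.factorial * Real.Gamma (l + ν + 1))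

lemma besselJ_eq {ν t : ℝ} (ht : 0 < t) :
    besselJ ν t = (t / 2) ^ ν * ∑' l, besselTerm ν t l := by
  rw [besselJ, ← tsum_mul_left]
  refine tsum_congr fun l => ?_
  rw [besselTerm, Real.rpow_add (by positivity),
    show (2 * (l : ℝ)) = ((2 * l : ℕ) : ℝ) by push_cast; ring, Real.rpow_natCast]
  ring

open ProbabilityTheory in
/-- Moments of the beta distribution. -/
lemma integral_pow_betaMeasure {a b : ℝ} (ha : 0 < a) (hb : 0 < b) (l : ℕ) :
    ∫ x, x ^ l ∂(betaMeasure a b) = poch a l / poch (a + b) l := by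
  have hm : ∀ a', Measurable (betaPDF a' b) := fun a' =>
    (measurable_betaPDFReal a' b).ennreal_ofReal
  have hnn : ∀ a', 0 < a' → ∀ x, 0 ≤ betaPDFReal a' b x := by
    intro a' ha' x
    by_cases hx : 0 < x ∧ x < 1
    · exact (betaPDFReal_pos hx.1 hx.2 ha' hb).le
    · simp [betaPDFReal, hx]
  have hal : 0 < a + l := by positivity
  have h1 : ∫ x, betaPDFReal (a + l) b x = 1 := by
    rw [integral_eq_lintegral_of_nonneg_ae (Filter.Eventually.of_forall (hnn _ hal))
      (measurable_betaPDFReal _ b).aestronglyMeasurable]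
    have := lintegral_betaPDF_eq_one hal hb
    simp only [betaPDF] at this
    simp [this]
  rw [betaMeasure, integral_withDensity_eq_integral_toReal_smul (hm a)
    (Filter.Eventually.of_forall fun x => by simp [betaPDF])]
  have h2 : ∀ x, (betaPDF a b x).toReal • x ^ l =
      beta (a + l) b / beta a b * betaPDFReal (a + l) b x := by
    intro x
    rw [betaPDF, ENNReal.toReal_ofReal (hnn a ha x), smul_eq_mul]
    by_cases hx : 0 < x ∧ x < 1
    · have e1 := (beta_pos ha hb).ne'
      have e2 := (beta_pos hal hb).ne'
      rw [betaPDFReal, betaPDFReal, if_pos hx, if_pos hx,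
        show a + l - 1 = (a - 1) + l by ring, Real.rpow_add_natCast hx.1.ne']
      field_simp
    · simp [betaPDFReal, hx]
  simp_rw [h2]
  rw [integral_const_mul, h1, mul_one, beta, beta, show a + l + b = a + b + l by ring,
    Gamma_add_nat ha, Gamma_add_nat (by positivity : 0 < a + b)]
  have e1 := (Real.Gamma_pos_of_pos ha).ne'
  have e2 := (Real.Gamma_pos_of_pos hb).ne'
  have e3 := (Real.Gamma_pos_of_pos (add_pos ha hb)).ne'
  have e4 := (poch_pos (add_pos ha hb) l).ne'
  field_simp

open ProbabilityTheory in
/-- Poisson's integral representation: up to the factor `Γ(ν+1)`, the series `∑ₗ besselTerm ν t l`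
is the expectation of `cos (t √X)` for `X` of law `Beta(1/2, ν + 1/2)`. -/
lemma hasSum_besselTerm {ν : ℝ} (hν : 0 ≤ ν) (t : ℝ) :
    HasSum (besselTerm ν t)
      ((∫ x, Real.cos (t * √x) ∂(betaMeasure (1 / 2) (ν + 1 / 2))) / Real.Gamma (ν + 1)) := by
  have hb : 0 < ν + 1 / 2 := by positivity
  have := isProbabilityMeasureBeta (α := 1 / 2) (β := ν + 1 / 2) (by norm_num) hb
  have hae : ∀ᵐ x ∂(betaMeasure (1 / 2) (ν + 1 / 2)), 0 < x ∧ x < 1 := by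
    rw [betaMeasure, ae_withDensity_iff
      (show Measurable (betaPDF _ _) from (measurable_betaPDFReal _ _).ennreal_ofReal)]
    refine Filter.Eventually.of_forall fun x hx => ?_
    by_contra h
    exact hx (by simp [betaPDF, betaPDFReal, h])
  have hsum : Summable fun l : ℕ => |t| ^ (2 * l) / ((2 * l).factorial : ℝ) :=
    (Real.summable_pow_div_factorial |t|).comp_injective
      (i := fun l : ℕ => 2 * l) (fun a b h => by simpa using h)
  have key := hasSum_integral_of_dominated_convergence
    (μ := betaMeasure (1 / 2) (ν + 1 / 2))
    (F := fun (l : ℕ) x => (-1 : ℝ) ^ l * t ^ (2 * l) / ((2 * l).factorial : ℝ) * x ^ l)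
    (f := fun x => Real.cos (t * √x))
    (fun l _ => |t| ^ (2 * l) / ((2 * l).factorial : ℝ))
    (fun l => by fun_prop) ?_ (Filter.Eventually.of_forall fun _ => hsum)
    (integrable_const _) ?_
  · refine (key.div_const (Real.Gamma (ν + 1))).congr_fun fun l => ?_
    rw [integral_const_mul, integral_pow_betaMeasure (by norm_num) hb,
      show (1 : ℝ) / 2 + (ν + 1 / 2) = ν + 1 by ring, besselTerm,
      show (l : ℝ) + ν + 1 = ν + 1 + l by ring, Gamma_add_nat (by positivity : 0 < ν + 1)]
    have e1 := poch_two_mul (1 / 2) l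
    rw [show (2 : ℝ) * (1 / 2) = 1 by norm_num, show (1 : ℝ) / 2 + 1 / 2 = 1 by norm_num,
      poch_one, poch_one] at e1
    rw [e1]
    have e2 := (poch_pos (by positivity : 0 < ν + 1) l).ne'
    have e3 := (poch_pos (by positivity : (0 : ℝ) < 1 / 2) l).ne'
    have e4 := (Real.Gamma_pos_of_pos (by positivity : 0 < ν + 1)).ne'
    rw [div_pow, pow_mul 2 2 l]
    norm_num
    field_simp
  · intro l
    filter_upwards [hae] with x hx
    rw [norm_mul, norm_div, norm_mul, norm_pow, norm_pow, norm_pow]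
    have : ‖x‖ ^ l ≤ 1 := pow_le_one₀ (norm_nonneg _) (by
      rw [Real.norm_of_nonneg hx.1.le]; exact hx.2.le)
    simpa using mul_le_mul_of_nonneg_left this
      (by positivity : 0 ≤ |t| ^ (2 * l) / ((2 * l).factorial : ℝ))
  · filter_upwards [hae] with x hx
    refine (Real.hasSum_cos (t * √x)).congr_fun fun l => ?_
    rw [mul_pow, pow_mul (√x), Real.sq_sqrt hx.1.le]
    ring

open ProbabilityTheory in
lemma abs_tsum_besselTerm_le {ν : ℝ} (hν : 0 ≤ ν) (t : ℝ) :
    |∑' l, besselTerm ν t l| ≤ 1 / Real.Gamma (ν + 1) := by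
  have hG := Real.Gamma_pos_of_pos (by positivity : 0 < ν + 1)
  have := isProbabilityMeasureBeta (α := 1 / 2) (β := ν + 1 / 2) (by norm_num) (by positivity)
  rw [(hasSum_besselTerm hν t).tsum_eq, abs_div, abs_of_pos hG]
  gcongr
  have := norm_integral_le_of_norm_le_const (μ := betaMeasure (1 / 2) (ν + 1 / 2))
    (f := fun x => Real.cos (t * √x)) (C := 1)
    (Filter.Eventually.of_forall fun x => Real.abs_cos_le_one _)
  rwa [probReal_univ, mul_one] at this

lemma measurable_tsum_besselTerm {ν : ℝ} (hν : 0 ≤ ν) :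
    Measurable fun t => ∑' l, besselTerm ν t l := by
  refine measurable_of_tendsto_metrizable
    (f := fun n t => ∑ l ∈ Finset.range n, besselTerm ν t l)
    (fun n => Finset.measurable_fun_sum _ fun l _ => by unfold besselTerm; fun_prop) ?_
  rw [tendsto_pi_nhds]
  exact fun t => (hasSum_besselTerm hν t).summable.hasSum.tendsto_sum_nat

lemma integrableOn_exp_mul_rpow {u s : ℝ} (hu : 0 < u) (hs : 0 < s) :
    IntegrableOn (fun t => Real.exp (-u * t) * t ^ (s - 1)) (Ioi 0) := by
  refine .of_integral_ne_zero ?_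
  simp_rw [mul_comm (Real.exp _), neg_mul]
  rw [Real.integral_rpow_mul_exp_neg_mul_Ioi hs hu]
  have := Real.Gamma_pos_of_pos hs
  positivity

lemma analyticOnNhd_integral {α ν : ℝ} (hα : 0 < α) (hν : 0 ≤ ν) :
    AnalyticOnNhd ℝ (fun u : ℝ =>
      ∫ t in Ioi (0 : ℝ), Real.exp (-u * t) * t ^ (α - 1) * besselJ ν t) (Ioi 0) := by
  have hG := Real.Gamma_pos_of_pos (by positivity : 0 < ν + 1)
  have hm := measurable_tsum_besselTerm hν
  have h := analyticOnNhd_laplace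
    (f := fun t => t ^ (α - 1) * ((t / 2) ^ ν * ∑' l, besselTerm ν t l))
    (g := fun t => (2 ^ ν)⁻¹ * (1 / Real.Gamma (ν + 1)) * t ^ (α + ν - 1))
    (Measurable.aemeasurable (by fun_prop)) (Measurable.aemeasurable (by fun_prop)) ?_ ?_
  · refine h.congr isOpen_Ioi fun u hu => ?_
    refine setIntegral_congr_fun measurableSet_Ioi fun t ht => ?_
    rw [besselJ_eq ht, mul_assoc]
  · intro t ht
    have ht : 0 < t := ht
    rw [abs_mul, abs_mul, abs_of_pos (by positivity), abs_of_pos (by positivity)]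
    calc _ ≤ t ^ (α - 1) * ((t / 2) ^ ν * (1 / Real.Gamma (ν + 1))) := by
          gcongr; exact abs_tsum_besselTerm_le hν t
      _ = _ := by
          rw [show α + ν - 1 = (α - 1) + ν by ring, Real.rpow_add ht,
            Real.div_rpow ht.le (by norm_num)]
          ring
  · intro u hu
    simp_rw [mul_left_comm (Real.exp _)]
    exact (integrableOn_exp_mul_rpow hu (by positivity)).const_mul _

/-! ### Termwise integration and the final formula -/

/-- The Laplace transform of the `l`-th term of the series of `t ^ (α - 1) * besselJ ν t`, with
`(1/u)^(α+ν+2l) Γ(α+ν+2l)` the value of the Gamma integral. -/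
lemma term_eq {u α ν : ℝ} (hu : 0 < u) (hα : 0 < α) (hν : 0 ≤ ν) (l : ℕ) :
    (-1) ^ l * (1 / 2 : ℝ) ^ (ν + 2 * l) / (l.factorial * Real.Gamma (l + ν + 1)) *
      ((1 / u) ^ (α + ν + 2 * l) * Real.Gamma (α + ν + 2 * l)) =
    (1 / 2 : ℝ) ^ ν * Real.Gamma (α + ν) / Real.Gamma (ν + 1) * (1 / u) ^ (α + ν) *
      (poch ((α + ν) / 2) l * poch ((α + ν) / 2 + 1 / 2) l / (poch (1 + ν) l * l.factorial) *
        (-(1 / u ^ 2)) ^ l) := by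
  have h2 : (2 * (l : ℝ)) = ((2 * l : ℕ) : ℝ) := by push_cast; ring
  rw [h2, Gamma_add_nat (by positivity : 0 < α + ν), show (l : ℝ) + ν + 1 = 1 + ν + l by ring,
    Gamma_add_nat (by positivity : 0 < 1 + ν), Real.rpow_add_natCast (by norm_num),
    Real.rpow_add_natCast (by positivity), add_comm ν 1]
  have h3 := poch_two_mul ((α + ν) / 2) l
  rw [mul_div_cancel₀ _ (two_ne_zero)] at h3
  rw [h3, neg_pow, pow_mul, pow_mul, div_pow 1 u 2, one_pow]
  have e1 := (poch_pos (by positivity : 0 < 1 + ν) l).ne'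
  have e2 := (Real.Gamma_pos_of_pos (by positivity : 0 < 1 + ν)).ne'
  have e4 : ((1 / 2 : ℝ) ^ 2) ^ l * 4 ^ l = 1 := by rw [← mul_pow]; norm_num
  field_simp
  linear_combination ((-1) ^ l * u⁻¹ ^ (l * 2) * poch ((α + ν) / 2) l * poch ((α + ν + 1) / 2) l) * e4

/-- For large `u` the Bessel series may be integrated term by term. -/
lemma integral_eq_of_large {u α ν : ℝ} (hu : 0 < u) (hα : 0 < α) (hν : 0 ≤ ν)
    (hx : ((α + ν) / 2 + 1) * ((α + ν) / 2 + 1 / 2 + 1) * (1 / u ^ 2) < 1) :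
    ∫ t in Ioi (0 : ℝ), Real.exp (-u * t) * t ^ (α - 1) * besselJ ν t =
      (1 / 2 : ℝ) ^ ν * Real.Gamma (α + ν) / Real.Gamma (ν + 1) * (1 / u) ^ (α + ν) *
      ∑' l : ℕ, poch ((α + ν) / 2) l * poch ((α + ν) / 2 + 1 / 2) l /
        (poch (1 + ν) l * l.factorial) * (-(1 / u ^ 2)) ^ l := by
  set D : ℕ → ℝ := fun l =>
    (-1) ^ l * (1 / 2 : ℝ) ^ (ν + 2 * l) / (l.factorial * Real.Gamma (l + ν + 1)) with hD
  set F : ℕ → ℝ → ℝ := fun l t => D l * (Real.exp (-u * t) * t ^ (α + ν + 2 * l - 1)) with hF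
  have hpos : ∀ l : ℕ, 0 < α + ν + 2 * l := fun l => by positivity
  have hgam : ∀ l : ℕ, ∫ t in Ioi (0 : ℝ), Real.exp (-u * t) * t ^ (α + ν + 2 * l - 1) =
      (1 / u) ^ (α + ν + 2 * l) * Real.Gamma (α + ν + 2 * l) := by
    intro l
    rw [← Real.integral_rpow_mul_exp_neg_mul_Ioi (hpos l) hu]
    simp_rw [neg_mul, mul_comm (Real.exp _)]
  have hFint : ∀ l, IntegrableOn (F l) (Ioi 0) := fun l =>
    (integrableOn_exp_mul_rpow hu (hpos l)).const_mul _
  have hval : ∀ l, ∫ t in Ioi (0 : ℝ), F l t =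
      (1 / 2 : ℝ) ^ ν * Real.Gamma (α + ν) / Real.Gamma (ν + 1) * (1 / u) ^ (α + ν) *
      (poch ((α + ν) / 2) l * poch ((α + ν) / 2 + 1 / 2) l / (poch (1 + ν) l * l.factorial) *
        (-(1 / u ^ 2)) ^ l) := by
    intro l
    simp only [hF, hD]
    rw [integral_const_mul, hgam, term_eq hu hα hν]
  have hnorm : ∀ l, ∫ t in Ioi (0 : ℝ), ‖F l t‖ = ‖∫ t in Ioi (0 : ℝ), F l t‖ := by
    intro l
    have hG := Real.Gamma_pos_of_pos (hpos l)
    have h1 : ∀ t ∈ Ioi (0 : ℝ), ‖F l t‖ =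
        |D l| * (Real.exp (-u * t) * t ^ (α + ν + 2 * l - 1)) := by
      intro t ht
      have ht : 0 < t := ht
      simp only [hF]
      rw [norm_mul, Real.norm_eq_abs, Real.norm_of_nonneg (by positivity)]
    rw [setIntegral_congr_fun measurableSet_Ioi h1, integral_const_mul, integral_const_mul, hgam,
      norm_mul, Real.norm_eq_abs, Real.norm_of_nonneg (by positivity)]
  have ha : 0 < (α + ν) / 2 := by positivity
  have hsum : Summable fun l => ∫ t in Ioi (0 : ℝ), ‖F l t‖ := by
    simp_rw [hnorm, hval]
    refine Summable.norm ?_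
    refine Summable.mul_left _ ?_
    refine Summable.of_norm_bounded (summable_geometric_of_lt_one (by positivity) hx) fun l => ?_
    have h1 := abs_poch_le (b := (α + ν) / 2) (le_refl (1 : ℝ)) l
    have h2 := abs_poch_le (b := (α + ν) / 2 + 1 / 2) (by linarith : 1 ≤ 1 + ν) l
    rw [poch_one] at h1
    have hp := poch_pos (by positivity : 0 < 1 + ν) l
    rw [norm_mul, norm_div, norm_mul, norm_pow, norm_neg,
      Real.norm_of_nonneg (by positivity : 0 ≤ 1 / u ^ 2),
      Real.norm_of_nonneg (by positivity : 0 ≤ poch (1 + ν) l * l.factorial)]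
    rw [abs_of_pos ha] at h1
    rw [abs_of_pos (by positivity : 0 < (α + ν) / 2 + 1 / 2)] at h2
    rw [mul_pow, mul_pow _ _ l]
    gcongr
    rw [div_le_iff₀ (by positivity)]
    calc _ ≤ _ := mul_le_mul h1 h2 (abs_nonneg _) (by positivity)
      _ = _ := by ring
  have key := (hasSum_integral_of_summable_integral_norm hFint hsum).tsum_eq
  simp_rw [hval] at key
  rw [tsum_mul_left] at key
  rw [key]
  refine setIntegral_congr_fun measurableSet_Ioi fun t ht => ?_
  have ht : 0 < t := ht
  simp only [besselJ]
  rw [← tsum_mul_left]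
  refine tsum_congr fun l => ?_
  simp only [hF, hD]
  rw [show α + ν + 2 * (l : ℝ) - 1 = (α - 1) + (ν + 2 * l) by ring, Real.rpow_add ht,
    show t / 2 = t * (1 / 2) by ring, Real.mul_rpow ht.le (by norm_num)]
  ring

/-- Weber–Schafheitlin type formula: for `u > 0`, `α > 0`, `ν ≥ 0`,
`∫₀^∞ e^{−ut} t^{α−1} J_ν(t) dt
  = (1/2)^ν Γ(α+ν) / ((1+u²)^{(α+ν)/2} Γ(ν+1)) · ₂F₁((α+ν)/2, (1−α+ν)/2; 1+ν; 1/(1+u²))`. -/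
theorem integral_exp_mul_rpow_besselJ (u α ν : ℝ) (hu : 0 < u) (hα : 0 < α) (hν : 0 ≤ ν) :
    ∫ t in Set.Ioi (0 : ℝ), Real.exp (-u * t) * t ^ (α - 1) * besselJ ν t =
      ((1 / 2 : ℝ) ^ ν * Real.Gamma (α + ν)
          / ((1 + u ^ 2) ^ ((α + ν) / 2) * Real.Gamma (ν + 1)))
        * hyp2F1 ((α + ν) / 2) ((1 - α + ν) / 2) (1 + ν) (1 / (1 + u ^ 2)) := by
  have hG := Real.Gamma_pos_of_pos (by positivity : 0 < ν + 1)
  have hrhs : AnalyticOnNhd ℝ (fun u : ℝ => ((1 / 2 : ℝ) ^ ν * Real.Gamma (α + ν)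
          / ((1 + u ^ 2) ^ ((α + ν) / 2) * Real.Gamma (ν + 1)))
        * hyp2F1 ((α + ν) / 2) ((1 - α + ν) / 2) (1 + ν) (1 / (1 + u ^ 2))) (Ioi 0) := by
    intro v hv
    have hv : 0 < v := hv
    have h1 : AnalyticAt ℝ (fun u : ℝ => 1 + u ^ 2) v := by fun_prop
    have h2 : AnalyticAt ℝ (fun u : ℝ => 1 / (1 + u ^ 2)) v :=
      analyticAt_const.div h1 (by positivity)
    have h3 : AnalyticAt ℝ (fun u : ℝ => (1 + u ^ 2) ^ ((α + ν) / 2)) v := by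
      have he : (fun u : ℝ => (1 + u ^ 2) ^ ((α + ν) / 2)) =
          fun u => Real.exp (Real.log (1 + u ^ 2) * ((α + ν) / 2)) := by
        funext u
        rw [Real.rpow_def_of_pos (by positivity)]
      rw [he]
      exact ((h1.log (by positivity)).mul analyticAt_const).rexp
    have hball : 1 / (1 + v ^ 2) ∈ Metric.ball (0 : ℝ) 1 := by
      rw [mem_ball_zero_iff, Real.norm_of_nonneg (by positivity), div_lt_one (by positivity)]
      have := pow_pos hv 2
      linarith
    have h4 := (analyticOnNhd_hyp2F1 (a := (α + ν) / 2) (b := (1 - α + ν) / 2) (c := 1 + ν)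
      (by positivity) (by positivity) _ hball)
    refine AnalyticAt.mul (analyticAt_const.div (h3.mul analyticAt_const) (by positivity)) ?_
    exact AnalyticAt.fun_comp (g := hyp2F1 _ _ _) h4 h2
  set a := (α + ν) / 2 with ha
  set b := (1 - α + ν) / 2 with hb
  have ha0 : 0 < a := by positivity
  -- both bounds needed at `x = 1 / u ^ 2` hold as soon as `u` exceeds `M`
  set M : ℝ := 2 * (a + 1) * (|b| + 1) + (a + 1) * (a + 1 / 2 + 1) with hM
  have hM1 : 1 ≤ M := by
    have : 0 ≤ |b| := abs_nonneg b
    have h2 : 0 ≤ a * |b| := by positivity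
    have h3 : 0 ≤ a * a := by positivity
    simp only [hM]
    nlinarith
  have hlarge : ∀ v : ℝ, M < v →
      ∫ t in Set.Ioi (0 : ℝ), Real.exp (-v * t) * t ^ (α - 1) * besselJ ν t =
      ((1 / 2 : ℝ) ^ ν * Real.Gamma (α + ν) / ((1 + v ^ 2) ^ a * Real.Gamma (ν + 1)))
        * hyp2F1 a b (1 + ν) (1 / (1 + v ^ 2)) := by
    intro v hv
    have hv0 : 0 < v := by linarith
    have hMv : M < v ^ 2 := by nlinarith
    have hp1 : 0 ≤ 2 * (a + 1) * (|b| + 1) := by positivity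
    have hp2 : 0 ≤ (a + 1) * (a + 1 / 2 + 1) := by positivity
    have hx1 : 2 * (a + 1) * (|b| + 1) * (1 / v ^ 2) < 1 := by
      rw [mul_one_div, div_lt_one (by positivity)]; linarith
    have hx2 : (a + 1) * (a + 1 / 2 + 1) * (1 / v ^ 2) < 1 := by
      rw [mul_one_div, div_lt_one (by positivity)]; linarith
    rw [integral_eq_of_large hv0 hα hν hx2]
    have hpf := pfaff (b := b) ha0 (by linarith : 1 ≤ 1 + ν) (by positivity : 0 ≤ 1 / v ^ 2) hx1
    rw [show 1 + ν - b = a + 1 / 2 by simp only [ha, hb]; ring,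
      show 1 / v ^ 2 / (1 + 1 / v ^ 2) = 1 / (1 + v ^ 2) by field_simp; ring] at hpf
    rw [← ha, ← hpf, hyp2F1]
    have e : (1 / v) ^ (α + ν) * (1 + 1 / v ^ 2) ^ (-a) = ((1 + v ^ 2) ^ a)⁻¹ := by
      rw [show α + ν = 2 * a by simp only [ha]; ring, Real.rpow_mul (by positivity),
        Real.rpow_neg (by positivity), ← Real.inv_rpow (by positivity),
        ← Real.mul_rpow (by positivity) (by positivity), ← Real.inv_rpow (by positivity)]
      congr 1
      rw [Real.rpow_two]
      field_simp
      ring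
    rw [← mul_assoc, mul_assoc _ ((1 / v) ^ (α + ν)), e]
    congr 1
    field_simp
  have hMpos : M + 1 ∈ Ioi (0 : ℝ) := by simp only [mem_Ioi]; linarith
  refine (analyticOnNhd_integral hα hν).eqOn_of_preconnected_of_eventuallyEq hrhs
    isPreconnected_Ioi hMpos ?_ hu
  filter_upwards [Ioi_mem_nhds (lt_add_one M)] with v hv
  exact hlarge v hv
end

section
/- Let ξ, ζ, η be complex numbers such that η is not zero or a negative integer and Re(η − ξ − ζ) > 0. Then the series ∑_{l=0}^∞ (ξ)_l (ζ)_l / ((η)_l · l!) converges, and its sum equals Γ(η) Γ(η−ξ−ζ) / ( Γ(η−ξ) Γ(η−ζ) ). -/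
/-!
Gauss's summation theorem, by Gauss's original argument. Write `t_l(c) = (a)_l (b)_l / ((c)_l l!)`
and `F(c) = ∑ t_l(c)`.

* Euler's limit formula for `Γ` gives `(s)_{n+1} = n^s n! · r_n` with `r_n → 1 / Γ(s)`, for every `s`
  (`tendsto_inv_GammaSeq`). Hence `t_{n+1}(c) = O(n^{Re(a+b-c)-1})`, so the series converges
  absolutely and `l · t_l(c) → 0`.
* The identity `c (c-a-b) t_l(c) - (c-a)(c-b) t_l(c+1) = c (l t_l(c) - (l+1) t_{l+1}(c))` telescopes
  to the contiguous relation `c (c-a-b) F(c) = (c-a)(c-b) F(c+1)`.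
* Iterating, `(c)_n (c-a-b)_n F(c) = (c-a)_n (c-b)_n F(c+n)`. By dominated convergence
  `F(c+n) → 1`, and by the limit formula again
  `(c-a)_n (c-b)_n / ((c)_n (c-a-b)_n) → Γ(c) Γ(c-a-b) / (Γ(c-a) Γ(c-b))`.
-/

open Filter Topology Asymptotics

namespace GaussSum

/-- The rising factorial `(s)_l` of a complex number. -/
noncomputable abbrev poch (s : ℂ) (l : ℕ) : ℂ := (ascPochhammer ℂ l).eval s

/-- The `l`-th term of the hypergeometric series `₂F₁(a, b; c; 1)`. -/
noncomputable def term (a b c : ℂ) (l : ℕ) : ℂ :=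
  (poch a l * poch b l) / (poch c l * l.factorial)

lemma poch_succ (s : ℂ) (l : ℕ) : poch s (l + 1) = poch s l * (s + l) :=
  ascPochhammer_succ_eval l s

lemma poch_eq_prod (s : ℂ) (l : ℕ) : poch s l = ∏ j ∈ Finset.range l, (s + j) := by
  induction l with
  | zero => simp [poch]
  | succ l ih => rw [poch_succ, ih, Finset.prod_range_succ]

lemma poch_ne_zero {s : ℂ} (hs : ∀ m : ℕ, s ≠ -(m : ℂ)) (l : ℕ) : poch s l ≠ 0 := by
  rw [poch_eq_prod, Finset.prod_ne_zero_iff]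
  intro j _ h
  exact hs j (eq_neg_of_add_eq_zero_left h)

/-- Euler's limit formula in the form `(s)_{n+1} = n^s n! / GammaSeq s n`. At the poles of `Γ` both
sides vanish for large `n`, thanks to the convention `x / 0 = 0`. -/
lemma poch_succ_eq (s : ℂ) {n : ℕ} (hn : n ≠ 0) :
    poch s (n + 1) = (n : ℂ) ^ s * n.factorial * (Complex.GammaSeq s n)⁻¹ := by
  have h1 : (n : ℂ) ^ s ≠ 0 := by simp [Complex.cpow_eq_zero_iff, hn]
  have h2 : (n.factorial : ℂ) ≠ 0 := by exact_mod_cast n.factorial_ne_zero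
  rw [poch_eq_prod, Complex.GammaSeq, inv_div]
  field_simp

lemma tendsto_inv_GammaSeq (s : ℂ) :
    Tendsto (fun n => (Complex.GammaSeq s n)⁻¹) atTop (𝓝 (Complex.Gamma s)⁻¹) := by
  by_cases h : Complex.Gamma s = 0
  · obtain ⟨m, rfl⟩ := (Complex.Gamma_eq_zero_iff s).1 h
    rw [h, inv_zero]
    refine tendsto_const_nhds.congr' ?_
    filter_upwards [eventually_ge_atTop m] with n hn
    have : ∏ j ∈ Finset.range (n + 1), (-(m : ℂ) + j) = 0 :=
      Finset.prod_eq_zero (Finset.mem_range.2 (Nat.lt_succ_of_le hn)) (by simp)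
    rw [Complex.GammaSeq, this]
    simp
  · exact (Complex.GammaSeq_tendsto_Gamma s).inv₀ h

lemma succ_mul_term_succ (a b c : ℂ) {n : ℕ} (hn : n ≠ 0) :
    ((n : ℂ) + 1) * term a b c (n + 1) = (n : ℂ) ^ (a + b - c) *
      ((Complex.GammaSeq a n)⁻¹ * (Complex.GammaSeq b n)⁻¹ * Complex.GammaSeq c n) := by
  have h0 : (n : ℂ) ≠ 0 := by exact_mod_cast hn
  have h1 : (n : ℂ) ^ c ≠ 0 := by simp [Complex.cpow_eq_zero_iff, hn]
  have h2 : (n.factorial : ℂ) ≠ 0 := by exact_mod_cast n.factorial_ne_zero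
  have h3 : (n : ℂ) + 1 ≠ 0 := by exact_mod_cast n.succ_ne_zero
  rw [term, poch_succ_eq a hn, poch_succ_eq b hn, poch_succ_eq c hn, Complex.cpow_sub _ _ h0,
    Complex.cpow_add _ _ h0, Nat.factorial_succ]
  push_cast
  field_simp

lemma isBigO_succ_mul_term (a b c : ℂ) :
    (fun n : ℕ => ((n : ℂ) + 1) * term a b c (n + 1)) =O[atTop]
      fun n : ℕ => (n : ℝ) ^ (a + b - c).re := by
  have hlim := ((tendsto_inv_GammaSeq a).mul (tendsto_inv_GammaSeq b)).mul
    (Complex.GammaSeq_tendsto_Gamma c)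
  have h1 : (fun n : ℕ => (n : ℂ) ^ (a + b - c)) =O[atTop]
      fun n : ℕ => (n : ℝ) ^ (a + b - c).re := by
    refine IsBigO.of_bound 1 ?_
    filter_upwards [eventually_gt_atTop 0] with n hn
    rw [Complex.norm_natCast_cpow_of_pos hn, one_mul]
    exact le_abs_self _
  have h2 := h1.mul (hlim.isBigO_one ℝ)
  simp only [mul_one] at h2
  refine h2.congr' ?_ EventuallyEq.rfl
  filter_upwards [eventually_ne_atTop 0] with n hn
  exact (succ_mul_term_succ a b c hn).symm

lemma tendsto_mul_term {a b c : ℂ} (hre : 0 < (c - a - b).re) :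
    Tendsto (fun l : ℕ => (l : ℂ) * term a b c l) atTop (𝓝 0) := by
  rw [← tendsto_add_atTop_iff_nat 1]
  have h : Tendsto (fun n : ℕ => (n : ℝ) ^ (a + b - c).re) atTop (𝓝 0) := by
    have := (tendsto_rpow_neg_atTop hre).comp tendsto_natCast_atTop_atTop
    refine this.congr fun n => ?_
    simp only [Function.comp, Complex.sub_re, Complex.add_re]
    ring_nf
  simpa using (isBigO_succ_mul_term a b c).trans_tendsto h

lemma summable_term {a b c : ℂ} (hre : 0 < (c - a - b).re) : Summable (term a b c) := by
  rw [← summable_nat_add_iff 1]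
  have hs : Summable fun n : ℕ => (n : ℝ) ^ ((a + b - c).re - 1) := by
    rw [Real.summable_nat_rpow]
    simp only [Complex.sub_re, Complex.add_re] at *
    linarith
  refine summable_of_isBigO_nat hs ?_
  have hinv : (fun n : ℕ => ((n : ℂ) + 1)⁻¹) =O[atTop] fun n : ℕ => (n : ℝ)⁻¹ := by
    refine IsBigO.of_bound 1 ?_
    filter_upwards [eventually_gt_atTop 0] with n hn
    have hn' : (0 : ℝ) < n := by exact_mod_cast hn
    have : ‖(n : ℂ) + 1‖ = (n : ℝ) + 1 := by
      rw [← Nat.cast_succ, Complex.norm_natCast, Nat.cast_succ]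
    rw [norm_inv, this, one_mul, norm_inv, Real.norm_of_nonneg hn'.le]
    gcongr
    linarith
  refine (hinv.mul (isBigO_succ_mul_term a b c)).congr' ?_ ?_
  · refine Eventually.of_forall fun n => ?_
    have h3 : (n : ℂ) + 1 ≠ 0 := by exact_mod_cast n.succ_ne_zero
    simp only
    field_simp
  · filter_upwards [eventually_gt_atTop 0] with n hn
    have hn' : (0 : ℝ) < n := by exact_mod_cast hn
    rw [Real.rpow_sub_one hn'.ne']
    field_simp

lemma mul_poch_add_one (c : ℂ) (l : ℕ) : c * poch (c + 1) l = poch c l * (c + l) := by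
  rw [← poch_succ, poch_eq_prod, poch_eq_prod, Finset.prod_range_succ', mul_comm]
  push_cast
  rw [add_zero]
  congr 1
  exact Finset.prod_congr rfl fun j _ => by ring

lemma term_contiguous (a b : ℂ) {c : ℂ} (hc : ∀ m : ℕ, c ≠ -(m : ℂ)) (l : ℕ) :
    c * (c - a - b) * term a b c l - (c - a) * (c - b) * term a b (c + 1) l =
      c * (l * term a b c l - ((l + 1 : ℕ) : ℂ) * term a b c (l + 1)) := by
  have hc0 : c ≠ 0 := by simpa using hc 0
  have hcl : c + l ≠ 0 := fun h => hc l (eq_neg_of_add_eq_zero_left h)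
  have hp : poch c l ≠ 0 := poch_ne_zero hc l
  have hf : (l.factorial : ℂ) ≠ 0 := by exact_mod_cast l.factorial_ne_zero
  have h3 : (l : ℂ) + 1 ≠ 0 := by exact_mod_cast l.succ_ne_zero
  have hq : poch (c + 1) l = poch c l * (c + l) / c := by
    rw [← mul_poch_add_one]; field_simp
  rw [term, term, term, hq, poch_succ, poch_succ, poch_succ, Nat.factorial_succ]
  push_cast
  generalize poch c l = p at *
  generalize poch a l = x at *
  generalize poch b l = y at *
  field_simp
  ring

lemma tsum_contiguous {a b c : ℂ} (hc : ∀ m : ℕ, c ≠ -(m : ℂ)) (hre : 0 < (c - a - b).re) :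
    c * (c - a - b) * ∑' l, term a b c l = (c - a) * (c - b) * ∑' l, term a b (c + 1) l := by
  have hre' : 0 < (c + 1 - a - b).re := by
    simp only [Complex.sub_re, Complex.add_re, Complex.one_re] at *
    linarith
  have h1 := ((summable_term hre).hasSum.mul_left (c * (c - a - b))).sub
    ((summable_term hre').hasSum.mul_left ((c - a) * (c - b)))
  have h2 := h1.tendsto_sum_nat
  have h3 : Tendsto (fun n : ℕ => -c * ((n : ℂ) * term a b c n)) atTop (𝓝 0) := by
    simpa using (tendsto_mul_term hre).const_mul (-c)
  have h4 := tendsto_nhds_unique h2 (h3.congr fun n => ?_)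
  · exact sub_eq_zero.1 h4
  · rw [Finset.sum_congr rfl fun l _ => term_contiguous a b hc l, ← Finset.mul_sum,
      Finset.sum_range_sub' (fun l : ℕ => (l : ℂ) * term a b c l)]
    simp

lemma ne_neg_add_nat {c : ℂ} (hc : ∀ m : ℕ, c ≠ -(m : ℂ)) (n m : ℕ) : c + n ≠ -(m : ℂ) := by
  intro h
  apply hc (n + m)
  push_cast
  linear_combination h

lemma re_add_nat {a b c : ℂ} (hre : 0 < (c - a - b).re) (n : ℕ) : 0 < (c + n - a - b).re := by
  have : (0 : ℝ) ≤ n := n.cast_nonneg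
  simp only [Complex.sub_re, Complex.add_re, Complex.natCast_re] at *
  linarith

lemma poch_mul_tsum {a b c : ℂ} (hc : ∀ m : ℕ, c ≠ -(m : ℂ)) (hre : 0 < (c - a - b).re) (n : ℕ) :
    poch c n * poch (c - a - b) n * ∑' l, term a b c l =
      poch (c - a) n * poch (c - b) n * ∑' l, term a b (c + n) l := by
  induction n with
  | zero => simp [poch]
  | succ n ih =>
    have h := tsum_contiguous (ne_neg_add_nat hc n) (re_add_nat hre n)
    rw [poch_succ, poch_succ, poch_succ, poch_succ, Nat.cast_succ, ← add_assoc]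
    linear_combination (c + n) * (c - a - b + n) * ih + poch (c - a) n * poch (c - b) n * h

/-- Monotonicity of `n ↦ |(c+n)_l|` once `Re (c+n) > 0`; it supplies the dominating series. -/
lemma norm_poch_le {c : ℂ} {N n : ℕ} (hN : 0 < (c + N).re) (hn : N ≤ n) (l : ℕ) :
    ‖poch (c + N) l‖ ≤ ‖poch (c + n) l‖ := by
  rw [poch_eq_prod, poch_eq_prod, norm_prod, norm_prod]
  refine Finset.prod_le_prod (fun _ _ => norm_nonneg _) fun j _ => ?_
  have hn' : (N : ℝ) ≤ n := by exact_mod_cast hn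
  have hj : (0 : ℝ) ≤ j := j.cast_nonneg
  rw [Complex.norm_def, Complex.norm_def]
  apply Real.sqrt_le_sqrt
  simp only [Complex.normSq_apply, Complex.add_re, Complex.add_im, Complex.natCast_re,
    Complex.natCast_im] at *
  nlinarith

lemma norm_term_le {a b c : ℂ} {N n : ℕ} (hN : 0 < (c + N).re) (hn : N ≤ n) (l : ℕ) :
    ‖term a b (c + n) l‖ ≤ ‖term a b (c + N) l‖ := by
  have h0 : 0 < ‖poch (c + N) l‖ := by
    refine norm_pos_iff.2 (poch_ne_zero (fun m h => ?_) l)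
    rw [h] at hN
    have : (0 : ℝ) ≤ m := m.cast_nonneg
    simp only [Complex.neg_re, Complex.natCast_re] at hN
    linarith
  have hf : 0 < ‖(l.factorial : ℂ)‖ := norm_pos_iff.2 (by exact_mod_cast l.factorial_ne_zero)
  rw [term, term, norm_div, norm_div, norm_mul (poch (c + n) l), norm_mul (poch (c + N) l)]
  have := norm_poch_le hN hn l
  gcongr

lemma tendsto_inv_add_nat (c : ℂ) : Tendsto (fun n : ℕ => (c + n)⁻¹) atTop (𝓝 0) := by
  refine tendsto_inv₀_cobounded.comp ?_
  rw [← tendsto_norm_atTop_iff_cobounded]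
  have h : Tendsto (fun n : ℕ => c.re + (n : ℝ)) atTop atTop :=
    tendsto_atTop_add_const_left _ _ tendsto_natCast_atTop_atTop
  refine tendsto_atTop_mono (fun n => ?_) h
  simpa using (Complex.re_le_norm (c + n))

lemma tendsto_inv_poch (c : ℂ) (l : ℕ) :
    Tendsto (fun n : ℕ => (poch (c + n) l)⁻¹) atTop (𝓝 (if l = 0 then 1 else 0)) := by
  induction l with
  | zero => simp [poch]
  | succ l ih =>
    have h := ih.mul (tendsto_inv_add_nat (c + l))
    rw [mul_zero] at h
    rw [if_neg l.succ_ne_zero]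
    refine h.congr fun n => ?_
    rw [poch_succ, mul_inv, add_right_comm]

lemma tendsto_tsum_term {a b c : ℂ} (hre : 0 < (c - a - b).re) :
    Tendsto (fun n : ℕ => ∑' l, term a b (c + n) l) atTop (𝓝 1) := by
  obtain ⟨N, hN⟩ := exists_nat_gt (-c.re)
  have hN' : 0 < (c + N).re := by
    simp only [Complex.add_re, Complex.natCast_re]
    linarith
  have h := tendsto_tsum_of_dominated_convergence (𝓕 := atTop)
    (f := fun n : ℕ => term a b (c + n)) (g := fun l : ℕ => if l = 0 then (1 : ℂ) else 0)
    (summable_term (re_add_nat hre N)).norm ?_ ?_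
  · simpa using h
  · intro l
    have h1 := (tendsto_inv_poch c l).const_mul (poch a l * poch b l / l.factorial)
    have h2 : poch a l * poch b l / l.factorial * (if l = 0 then (1 : ℂ) else 0) =
        if l = 0 then 1 else 0 := by
      split_ifs with hl
      · subst hl; simp [poch]
      · simp
    rw [h2] at h1
    refine h1.congr fun n => ?_
    rw [term, div_mul_eq_div_div_swap, div_eq_mul_inv _ (poch (c + n) l)]
  · filter_upwards [eventually_ge_atTop N] with n hn l
    exact norm_term_le hN' hn l

lemma tendsto_poch_ratio (a b c : ℂ) :
    Tendsto (fun n : ℕ => poch (c - a) (n + 1) * poch (c - b) (n + 1) /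
      (poch c (n + 1) * poch (c - a - b) (n + 1))) atTop
      (𝓝 (Complex.Gamma c * Complex.Gamma (c - a - b)
        / (Complex.Gamma (c - a) * Complex.Gamma (c - b)))) := by
  have h := ((tendsto_inv_GammaSeq (c - a)).mul (tendsto_inv_GammaSeq (c - b))).mul
    ((Complex.GammaSeq_tendsto_Gamma c).mul (Complex.GammaSeq_tendsto_Gamma (c - a - b)))
  rw [← mul_inv, mul_comm, ← div_eq_mul_inv] at h
  refine h.congr' ?_
  filter_upwards [eventually_ne_atTop 0] with n hn
  have h0 : (n : ℂ) ≠ 0 := by exact_mod_cast hn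
  have hf : (n.factorial : ℂ) ≠ 0 := by exact_mod_cast n.factorial_ne_zero
  have hpow (s : ℂ) : (n : ℂ) ^ s ≠ 0 := by simp [Complex.cpow_eq_zero_iff, hn]
  rw [poch_succ_eq _ hn, poch_succ_eq _ hn, poch_succ_eq _ hn, poch_succ_eq _ hn]
  -- The powers of `n` cancel because `(c - a) + (c - b) = c + (c - a - b)`.
  have hE : (n : ℂ) ^ (c - a) * (n : ℂ) ^ (c - b) = (n : ℂ) ^ c * (n : ℂ) ^ (c - a - b) := by
    rw [← Complex.cpow_add _ _ h0, ← Complex.cpow_add _ _ h0]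
    ring_nf
  have h1 := hpow c
  have h2 := hpow (c - a - b)
  generalize (n : ℂ) ^ (c - a) = A at *
  generalize (n : ℂ) ^ (c - b) = B at *
  generalize (n : ℂ) ^ c = C at *
  generalize (n : ℂ) ^ (c - a - b) = D at *
  have : ∀ p q r s : ℂ, A * n.factorial * p * (B * n.factorial * q) /
      (C * n.factorial * r⁻¹ * (D * n.factorial * s⁻¹)) = p * q * (r * s) := by
    intro p q r s
    have : A * n.factorial * p * (B * n.factorial * q) =
      (C * D) * (n.factorial * n.factorial) * (p * q) := by rw [← hE]; ring
    rw [this]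
    field_simp
  rw [this]

end GaussSum

open GaussSum in

/-- Gauss's summation theorem: if `η` is not zero or a negative integer and
`Re(η − ξ − ζ) > 0`, then the hypergeometric series at `z = 1`,
`∑_{l=0}^∞ (ξ)_l (ζ)_l / ((η)_l l!)`, converges with sum
`Γ(η) Γ(η−ξ−ζ) / (Γ(η−ξ) Γ(η−ζ))`. -/
theorem gauss_hypergeometric_sum_at_one (ξ ζ η : ℂ)
    (hη : ∀ m : ℕ, η ≠ -(m : ℂ)) (hre : 0 < (η - ξ - ζ).re) :
    HasSum
      (fun l : ℕ => ((ascPochhammer ℂ l).eval ξ * (ascPochhammer ℂ l).eval ζ)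
        / ((ascPochhammer ℂ l).eval η * l.factorial))
      (Complex.Gamma η * Complex.Gamma (η - ξ - ζ)
        / (Complex.Gamma (η - ξ) * Complex.Gamma (η - ζ))) := by
  have hs : Summable (term ξ ζ η) := summable_term hre
  have hpos : ∀ m : ℕ, η - ξ - ζ ≠ -(m : ℂ) := by
    intro m h
    have : (0 : ℝ) ≤ m := m.cast_nonneg
    rw [h, Complex.neg_re, Complex.natCast_re] at hre
    linarith
  have h1 := (tendsto_poch_ratio ξ ζ η).mul
    ((tendsto_add_atTop_iff_nat 1).2 (tendsto_tsum_term hre))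
  rw [mul_one] at h1
  have h2 : ∑' l, term ξ ζ η l = Complex.Gamma η * Complex.Gamma (η - ξ - ζ)
      / (Complex.Gamma (η - ξ) * Complex.Gamma (η - ζ)) := by
    refine tendsto_nhds_unique (tendsto_const_nhds.congr fun n => ?_) h1
    have h := poch_mul_tsum hη hre (n + 1)
    have hp := poch_ne_zero hη (n + 1)
    have hq := poch_ne_zero hpos (n + 1)
    rw [div_mul_eq_mul_div, ← h, mul_div_cancel_left₀ _ (mul_ne_zero hp hq)]
  rw [← h2]
  exact hs.hasSum
end

section
/- For every α with 1 < α < 4/3 and every u with 0 < u < 1, ∫₀^∞ e^{−ut} t^{α−1} J₀(t) dt ≥ Γ(α) Γ(1/2) / ( 2 Γ(1 − α/2) Γ((α+1)/2) ), and this lower bound is strictly positive. -/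
open MeasureTheory

/-! ### Poisson's integral for `J₀` -/

lemma wallis_product (l : ℕ) :
    ∏ i ∈ Finset.range l, ((2 * i + 1 : ℝ) / (2 * i + 2))
      = (2 * l).factorial / (4 ^ l * (l.factorial : ℝ) ^ 2) := by
  induction l with
  | zero => simp
  | succ k ih =>
    rw [Finset.prod_range_succ, ih, show 2 * (k + 1) = (2 * k + 1) + 1 by ring,
      Nat.factorial_succ, Nat.factorial_succ, Nat.factorial_succ]
    have := Nat.factorial_ne_zero k
    push_cast
    field_simp
    ring

/-- Poisson's integral `J₀(t) = π⁻¹ ∫₀^π cos(t sin θ) dθ`: expand the cosine and integrate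
termwise with Wallis' formula. -/
lemma besselJ_zero_eq_integral (t : ℝ) :
    besselJ 0 t = (∫ θ in (0 : ℝ)..Real.pi, Real.cos (t * Real.sin θ)) / Real.pi := by
  have hsum : HasSum (fun l : ℕ => ∫ θ in (0 : ℝ)..Real.pi,
      (-1 : ℝ) ^ l * (t * Real.sin θ) ^ (2 * l) / (2 * l).factorial)
      (∫ θ in (0 : ℝ)..Real.pi, Real.cos (t * Real.sin θ)) := by
    refine intervalIntegral.hasSum_integral_of_dominated_convergence
      (fun l _ => |t| ^ (2 * l) / (2 * l).factorial) ?_ ?_ ?_ ?_ ?_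
    · intro l
      exact Continuous.aestronglyMeasurable (by fun_prop)
    · intro l
      refine ae_of_all _ fun θ _ => ?_
      rw [norm_div, norm_mul, norm_pow, norm_pow, norm_mul]
      simp only [norm_neg, norm_one, one_pow, one_mul, Real.norm_eq_abs, Nat.abs_cast]
      gcongr
      exact mul_le_of_le_one_right (abs_nonneg t) (Real.abs_sin_le_one θ)
    · exact ae_of_all _ fun θ _ => (Real.hasSum_cosh |t|).summable
    · exact intervalIntegrable_const
    · exact ae_of_all _ fun θ _ => Real.hasSum_cos _
  rw [← hsum.tsum_eq, ← tsum_div_const, besselJ]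
  refine tsum_congr fun l => ?_
  have h1 : ∀ θ : ℝ, (-1 : ℝ) ^ l * (t * Real.sin θ) ^ (2 * l) / (2 * l).factorial
      = ((-1 : ℝ) ^ l * t ^ (2 * l) / (2 * l).factorial) * Real.sin θ ^ (2 * l) := by
    intro θ; rw [mul_pow]; ring
  have h2 : (t / 2) ^ ((0 : ℝ) + 2 * l) = (t / 2) ^ (2 * l) := by
    rw [zero_add, ← Real.rpow_natCast]; push_cast; rfl
  simp_rw [h1]
  rw [intervalIntegral.integral_const_mul, integral_sin_pow_even, wallis_product, h2, add_zero,
    Real.Gamma_nat_eq_factorial, div_pow, pow_mul (2 : ℝ) 2 l]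
  have := Nat.factorial_ne_zero l
  have := Nat.factorial_ne_zero (2 * l)
  have := Real.pi_ne_zero
  norm_num
  field_simp

lemma abs_besselJ_zero_le_one (t : ℝ) : |besselJ 0 t| ≤ 1 := by
  rw [besselJ_zero_eq_integral, abs_div, abs_of_pos Real.pi_pos, div_le_one Real.pi_pos]
  have := intervalIntegral.norm_integral_le_of_norm_le_const (a := 0) (b := Real.pi) (C := 1)
    (f := fun θ => Real.cos (t * Real.sin θ)) (fun θ _ => Real.abs_cos_le_one _)
  simpa [abs_of_pos Real.pi_pos] using this

lemma continuous_besselJ_zero : Continuous (besselJ 0) := by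
  have : besselJ 0 = fun t =>
      (∫ θ in (0 : ℝ)..Real.pi, Real.cos (t * Real.sin θ)) / Real.pi :=
    funext besselJ_zero_eq_integral
  rw [this]
  refine Continuous.div_const ?_ _
  exact intervalIntegral.continuous_parametric_intervalIntegral_of_continuous'
    (by unfold Function.uncurry; fun_prop) _ _

/-! ### The Laplace transform of `t J₀(t)` -/

lemma integrableOn_mul_exp {p : ℝ} (hp : 0 < p) :
    IntegrableOn (fun t : ℝ => Real.exp (-p * t) * t) (Set.Ioi 0) := by
  have := integrableOn_rpow_mul_exp_neg_mul_rpow (p := 1) (s := 1) (b := p)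
    (by norm_num) one_pos hp
  simpa [mul_comm] using this

lemma integral_exp_mul_cos {p : ℝ} (hp : 0 < p) (s : ℝ) :
    ∫ t in Set.Ioi (0 : ℝ), Real.exp (-p * t) * t * Real.cos (t * s)
      = (p ^ 2 - s ^ 2) / (p ^ 2 + s ^ 2) ^ 2 := by
  have hD : p ^ 2 + s ^ 2 ≠ 0 := by positivity
  have hint : IntegrableOn (fun t : ℝ => Real.exp (-p * t) * t * Real.cos (t * s))
      (Set.Ioi 0) := by
    refine Integrable.mono (integrableOn_mul_exp hp)
      (Continuous.aestronglyMeasurable (by fun_prop)) (ae_of_all _ fun t => ?_)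
    rw [norm_mul]
    exact mul_le_of_le_one_right (norm_nonneg _) (Real.abs_cos_le_one _)
  -- the primitive is the real part of `-(t / z + 1 / z ^ 2) * exp (-z * t)` with `z = p + i s`
  have hderiv : ∀ t ∈ Set.Ici (0 : ℝ), HasDerivAt (fun t : ℝ => -Real.exp (-p * t) *
      ((t * (p / (p ^ 2 + s ^ 2)) + (p ^ 2 - s ^ 2) / (p ^ 2 + s ^ 2) ^ 2) * Real.cos (t * s)
      - (t * (s / (p ^ 2 + s ^ 2)) + 2 * p * s / (p ^ 2 + s ^ 2) ^ 2) * Real.sin (t * s)))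
      (Real.exp (-p * t) * t * Real.cos (t * s)) t := by
    intro t _
    have he : HasDerivAt (fun t : ℝ => -Real.exp (-p * t)) (-(Real.exp (-p * t) * (-p))) t := by
      have := ((hasDerivAt_id t).const_mul (-p)).exp.fun_neg
      rw [mul_one] at this
      exact this
    have hc : HasDerivAt (fun t : ℝ => Real.cos (t * s)) (-Real.sin (t * s) * s) t := by
      simpa using ((hasDerivAt_id t).mul_const s).cos
    have hs : HasDerivAt (fun t : ℝ => Real.sin (t * s)) (Real.cos (t * s) * s) t := by
      simpa using ((hasDerivAt_id t).mul_const s).sin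
    have hl : ∀ a b : ℝ, HasDerivAt (fun t : ℝ => t * a + b) a t := fun a b => by
      simpa using ((hasDerivAt_id t).mul_const a).add_const b
    refine (he.fun_mul (((hl _ _).fun_mul hc).fun_sub ((hl _ _).fun_mul hs))).congr_deriv ?_
    field_simp
    ring
  have hlim : Filter.Tendsto (fun t : ℝ => -Real.exp (-p * t) *
      ((t * (p / (p ^ 2 + s ^ 2)) + (p ^ 2 - s ^ 2) / (p ^ 2 + s ^ 2) ^ 2) * Real.cos (t * s)
      - (t * (s / (p ^ 2 + s ^ 2)) + 2 * p * s / (p ^ 2 + s ^ 2) ^ 2) * Real.sin (t * s)))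
      Filter.atTop (nhds 0) := by
    have h0 : Filter.Tendsto (fun t : ℝ => Real.exp (-p * t)) Filter.atTop (nhds 0) := by
      simpa using tendsto_rpow_mul_exp_neg_mul_atTop_nhds_zero 0 p hp
    have h1 : Filter.Tendsto (fun t : ℝ => t * Real.exp (-p * t)) Filter.atTop (nhds 0) := by
      simpa using tendsto_rpow_mul_exp_neg_mul_atTop_nhds_zero 1 p hp
    have hlin : ∀ a b : ℝ, Filter.Tendsto (fun t : ℝ => Real.exp (-p * t) * (t * a + b))
        Filter.atTop (nhds 0) := fun a b => by
      have := (h1.mul_const a).add (h0.mul_const b)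
      simp only [zero_mul, add_zero] at this
      exact this.congr fun t => by ring
    have hbd : ∀ (a b : ℝ) (g : ℝ → ℝ), (∀ t, |g t| ≤ 1) →
        Filter.Tendsto (fun t : ℝ => Real.exp (-p * t) * (t * a + b) * g t)
        Filter.atTop (nhds 0) := fun a b g hg => by
      refine squeeze_zero_norm (fun t => ?_) (a := fun t => ‖Real.exp (-p * t) * (t * a + b)‖)
        (by simpa only [norm_zero] using (hlin a b).norm)
      rw [norm_mul]
      exact mul_le_of_le_one_right (norm_nonneg _) (hg t)
    have := (hbd (s / (p ^ 2 + s ^ 2)) (2 * p * s / (p ^ 2 + s ^ 2) ^ 2)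
      (fun t => Real.sin (t * s)) (fun t => Real.abs_sin_le_one _)).sub
      (hbd (p / (p ^ 2 + s ^ 2)) ((p ^ 2 - s ^ 2) / (p ^ 2 + s ^ 2) ^ 2)
      (fun t => Real.cos (t * s)) (fun t => Real.abs_cos_le_one _))
    simp only [sub_zero] at this
    exact this.congr fun t => by ring
  rw [integral_Ioi_of_hasDerivAt_of_tendsto' hderiv hint hlim]
  simp

/-- The integral over `[0, π]` of `Re (p + i sin θ)⁻²`, computed with an explicit primitive. -/
lemma integral_angular {p : ℝ} (hp : 0 < p) :
    ∫ θ in (0 : ℝ)..Real.pi, (p ^ 2 - Real.sin θ ^ 2) / (p ^ 2 + Real.sin θ ^ 2) ^ 2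
      = Real.pi * (p * (1 + p ^ 2) ^ (-(3 / 2) : ℝ)) := by
  obtain ⟨R, hR, hR2⟩ : ∃ R : ℝ, 0 < R ∧ R ^ 2 = 1 + p ^ 2 :=
    ⟨√(1 + p ^ 2), by positivity, Real.sq_sqrt (by positivity)⟩
  have hR3 : (1 + p ^ 2) ^ (-(3 / 2) : ℝ) = 1 / R ^ 3 := by
    rw [← hR2, ← Real.rpow_natCast, ← Real.rpow_mul hR.le, one_div, ← Real.rpow_natCast,
      ← Real.rpow_neg hR.le]
    norm_num
  rw [hR3]
  have hpR : p < R := by nlinarith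
  -- `θ + arctan (...)` is a branch of `arctan ((R / p) * tan θ)` that stays smooth at `π / 2`,
  -- so the fundamental theorem of calculus applies on all of `[0, π]`
  have hderiv : ∀ θ : ℝ, HasDerivAt (fun θ : ℝ =>
      p / R ^ 3 * (θ + Real.arctan ((R - p) * (Real.sin θ * Real.cos θ) /
        (p * Real.cos θ ^ 2 + R * Real.sin θ ^ 2)))
      + 1 / R ^ 2 * (Real.sin θ * Real.cos θ / (p ^ 2 + Real.sin θ ^ 2)))
      ((p ^ 2 - Real.sin θ ^ 2) / (p ^ 2 + Real.sin θ ^ 2) ^ 2) θ := by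
    intro θ
    have hs := Real.hasDerivAt_sin θ
    have hc := Real.hasDerivAt_cos θ
    have hsc := Real.sin_sq_add_cos_sq θ
    have hN1 : 0 < p * Real.cos θ ^ 2 + R * Real.sin θ ^ 2 := by
      nlinarith [sq_nonneg (Real.sin θ)]
    have hN2 : 0 < p ^ 2 + Real.sin θ ^ 2 := by positivity
    have hsc' : HasDerivAt (fun θ => Real.sin θ * Real.cos θ)
        (Real.cos θ ^ 2 - Real.sin θ ^ 2) θ :=
      (hs.fun_mul hc).congr_deriv (by ring)
    have hs2 : HasDerivAt (fun θ => Real.sin θ ^ 2) (2 * (Real.sin θ * Real.cos θ)) θ :=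
      (hs.fun_pow 2).congr_deriv (by norm_num; ring)
    have hc2 : HasDerivAt (fun θ => Real.cos θ ^ 2) (-(2 * (Real.sin θ * Real.cos θ))) θ :=
      (hc.fun_pow 2).congr_deriv (by norm_num; ring)
    have hd := (((hasDerivAt_id' θ).fun_add (((hsc'.const_mul (R - p)).fun_div
      ((hc2.const_mul p).fun_add (hs2.const_mul R)) hN1.ne').arctan)).const_mul
      (p / R ^ 3)).fun_add ((hsc'.fun_div (hs2.const_add (p ^ 2)) hN2.ne').const_mul
      (1 / R ^ 2))
    refine hd.congr_deriv ?_
    clear hd hs2 hc2 hsc' hs hc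
    generalize Real.sin θ = s at *
    generalize Real.cos θ = c at *
    have hmain : (p * c ^ 2 + R * s ^ 2) ^ 2 + ((R - p) * (s * c)) ^ 2 = p ^ 2 + s ^ 2 := by
      linear_combination (p ^ 2 * c ^ 2 + R ^ 2 * s ^ 2 + p ^ 2) * hsc + s ^ 2 * hR2
    have hatan : 1 / (1 + ((R - p) * (s * c) / (p * c ^ 2 + R * s ^ 2)) ^ 2) *
        (((R - p) * (c ^ 2 - s ^ 2) * (p * c ^ 2 + R * s ^ 2) - (R - p) * (s * c) *
        (p * -(2 * (s * c)) + R * (2 * (s * c)))) / (p * c ^ 2 + R * s ^ 2) ^ 2)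
        = (p * R - p ^ 2 - s ^ 2) / (p ^ 2 + s ^ 2) := by
      rw [← hmain]
      have : 0 < (p * c ^ 2 + R * s ^ 2) ^ 2 + ((R - p) * (s * c)) ^ 2 := by positivity
      have hc : c ^ 2 = 1 - s ^ 2 := by linarith
      have hnum : (R - p) * (c ^ 2 - s ^ 2) * (p * c ^ 2 + R * s ^ 2) - (R - p) * (s * c) *
          (p * -(2 * (s * c)) + R * (2 * (s * c))) = p * R - p ^ 2 - s ^ 2 := by
        rw [show (R - p) * (s * c) * (p * -(2 * (s * c)) + R * (2 * (s * c)))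
          = 2 * (R - p) ^ 2 * s ^ 2 * c ^ 2 by ring, hc]
        linear_combination (-s ^ 2) * hR2
      rw [hnum]
      have : 1 + ((R - p) * (s * c) / (p * c ^ 2 + R * s ^ 2)) ^ 2
        = ((p * c ^ 2 + R * s ^ 2) ^ 2 + ((R - p) * (s * c)) ^ 2) / (p * c ^ 2 + R * s ^ 2) ^ 2 := by
        field_simp
      rw [this]
      field_simp
    rw [hatan]
    have hc : c ^ 2 = 1 - s ^ 2 := by linarith
    have hsc2 : s * c * (2 * (s * c)) = 2 * s ^ 2 * c ^ 2 := by ring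
    rw [hsc2, hc]
    field_simp
    linear_combination (-R * (p ^ 2 - s ^ 2)) * hR2
  rw [intervalIntegral.integral_eq_sub_of_hasDerivAt (fun θ _ => hderiv θ)]
  · simp; ring
  · refine Continuous.intervalIntegrable ?_ _ _
    refine Continuous.div (by fun_prop) (by fun_prop) fun θ => ?_
    positivity

lemma laplace_mul_besselJ_zero {p : ℝ} (hp : 0 < p) :
    ∫ t in Set.Ioi (0 : ℝ), Real.exp (-p * t) * t * besselJ 0 t
      = p * (1 + p ^ 2) ^ (-(3 / 2) : ℝ) := by
  have hint : Integrable (Function.uncurry fun t θ : ℝ =>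
      Real.exp (-p * t) * t * Real.cos (t * Real.sin θ))
      ((volume.restrict (Set.Ioi 0)).prod (volume.restrict (Set.Ioc 0 Real.pi))) := by
    refine Integrable.mono ((integrableOn_mul_exp hp).mul_prod
      (integrable_const (1 : ℝ) (μ := volume.restrict (Set.Ioc 0 Real.pi))))
      (Continuous.aestronglyMeasurable (by unfold Function.uncurry; fun_prop))
      (ae_of_all _ fun z => ?_)
    simp only [Function.uncurry, mul_one]
    rw [norm_mul]
    exact mul_le_of_le_one_right (norm_nonneg _) (Real.abs_cos_le_one _)
  have hswap := integral_integral_swap hint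
  simp_rw [integral_exp_mul_cos hp] at hswap
  rw [← intervalIntegral.integral_of_le Real.pi_pos.le, integral_angular hp] at hswap
  have hpi := Real.pi_ne_zero
  rw [← mul_right_inj' hpi, ← hswap, ← integral_const_mul]
  refine integral_congr_ae (ae_of_all _ fun t => ?_)
  simp only
  rw [integral_const_mul, ← intervalIntegral.integral_of_le Real.pi_pos.le,
    besselJ_zero_eq_integral]
  field_simp

/-! ### Reduction to a positive integrand -/

/-- Writing `Γ(1-β) t^β = t ∫ s^(-β) e^{-st} ds` turns the oscillating integral of
`e^{-ut} t^β J₀(t)` into an integral of a positive function, through the Laplace transform of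
`t J₀(t)` at `u + s`. The bound `|J₀| ≤ 1` justifies Fubini. -/
lemma subordination {u β : ℝ} (hu : 0 < u) (hβ0 : 0 < β) (hβ1 : β < 1) :
    IntegrableOn (fun s : ℝ => s ^ (-β) * ((u + s) * (1 + (u + s) ^ 2) ^ (-(3 / 2) : ℝ)))
      (Set.Ioi 0) ∧
    Real.Gamma (1 - β) * ∫ t in Set.Ioi (0 : ℝ), Real.exp (-u * t) * t ^ β * besselJ 0 t
      = ∫ s in Set.Ioi (0 : ℝ), s ^ (-β) * ((u + s) * (1 + (u + s) ^ 2) ^ (-(3 / 2) : ℝ)) := by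
  have hJ := continuous_besselJ_zero
  have hker : ∀ t ∈ Set.Ioi (0 : ℝ), ∫ s in Set.Ioi (0 : ℝ), s ^ (-β) * Real.exp (-t * s)
      = t ^ (β - 1) * Real.Gamma (1 - β) := by
    intro t ht
    have := Real.integral_rpow_mul_exp_neg_mul_Ioi (a := 1 - β) (r := t) (by linarith) ht
    rw [one_div, Real.inv_rpow (le_of_lt ht), ← Real.rpow_neg (le_of_lt ht)] at this
    simpa using this
  have hfac : ∀ t s : ℝ, s ^ (-β) * (Real.exp (-(u + s) * t) * t * besselJ 0 t)
      = (Real.exp (-u * t) * t * besselJ 0 t) * (s ^ (-β) * Real.exp (-t * s)) := by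
    intro t s
    rw [show -(u + s) * t = -u * t + -t * s by ring, Real.exp_add]
    ring
  have hpow : ∀ t ∈ Set.Ioi (0 : ℝ), t * t ^ (β - 1) = t ^ β := by
    intro t ht
    rw [Real.rpow_sub_one (ne_of_gt ht)]
    have : t ≠ 0 := ne_of_gt ht
    field_simp
  have hint : Integrable (Function.uncurry fun t s : ℝ =>
      s ^ (-β) * (Real.exp (-(u + s) * t) * t * besselJ 0 t))
      ((volume.restrict (Set.Ioi 0)).prod (volume.restrict (Set.Ioi 0))) := by
    rw [integrable_prod_iff (Measurable.aestronglyMeasurable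
      (by unfold Function.uncurry; have := hJ.measurable; fun_prop))]
    constructor
    · filter_upwards [ae_restrict_mem measurableSet_Ioi] with t ht
      simp only [Function.uncurry, hfac]
      have := integrableOn_rpow_mul_exp_neg_mul_rpow (p := 1) (s := -β) (b := t)
        (by linarith) one_pos ht
      simp only [Real.rpow_one] at this
      exact this.const_mul _
    · have hdom : IntegrableOn (fun t : ℝ => t ^ β * Real.exp (-u * t) * Real.Gamma (1 - β))
          (Set.Ioi 0) := by
        have := integrableOn_rpow_mul_exp_neg_mul_rpow (p := 1) (s := β) (b := u)
          (by linarith) one_pos hu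
        simp only [Real.rpow_one] at this
        exact this.mul_const _
      refine Integrable.mono hdom ?_ ?_
      · refine (AEStronglyMeasurable.norm (f := Function.uncurry fun t s : ℝ =>
          s ^ (-β) * (Real.exp (-(u + s) * t) * t * besselJ 0 t)) ?_).integral_prod_right'
        exact Measurable.aestronglyMeasurable
          (by unfold Function.uncurry; have := hJ.measurable; fun_prop)
      · filter_upwards [ae_restrict_mem measurableSet_Ioi] with t ht
        have ht' : 0 < t := ht
        have h1 : ∫ s in Set.Ioi (0 : ℝ), ‖Function.uncurry (fun t s : ℝ =>
            s ^ (-β) * (Real.exp (-(u + s) * t) * t * besselJ 0 t)) (t, s)‖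
            = Real.exp (-u * t) * t * |besselJ 0 t| * (t ^ (β - 1) * Real.Gamma (1 - β)) := by
          rw [← hker t ht, ← integral_const_mul]
          refine setIntegral_congr_fun measurableSet_Ioi fun s hs => ?_
          have hs' : 0 < s := hs
          simp only [Function.uncurry, hfac, norm_mul, Real.norm_eq_abs, Real.abs_exp,
            abs_of_pos ht', abs_of_pos (Real.rpow_pos_of_pos hs' (-β))]
        have hG : 0 < Real.Gamma (1 - β) := Real.Gamma_pos_of_pos (by linarith)
        rw [h1, Real.norm_of_nonneg (by positivity), Real.norm_of_nonneg (by positivity),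
          ← hpow t ht]
        have hb := abs_besselJ_zero_le_one t
        calc _ = (t * t ^ (β - 1) * Real.exp (-u * t) * Real.Gamma (1 - β)) * |besselJ 0 t| := by
              ring
          _ ≤ _ := mul_le_of_le_one_right (by positivity) hb
  have hlap : ∀ s ∈ Set.Ioi (0 : ℝ), ∫ t in Set.Ioi (0 : ℝ),
      s ^ (-β) * (Real.exp (-(u + s) * t) * t * besselJ 0 t)
      = s ^ (-β) * ((u + s) * (1 + (u + s) ^ 2) ^ (-(3 / 2) : ℝ)) := by
    intro s hs
    have hs' : 0 < s := hs
    rw [integral_const_mul, laplace_mul_besselJ_zero (by positivity)]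
  constructor
  · exact (integrableOn_congr_fun hlap measurableSet_Ioi).mp hint.integral_prod_right
  · rw [← setIntegral_congr_fun measurableSet_Ioi hlap, ← integral_integral_swap hint,
      ← integral_const_mul]
    refine setIntegral_congr_fun measurableSet_Ioi fun t ht => ?_
    simp only [hfac]
    rw [integral_const_mul, hker t ht, ← hpow t ht]
    ring

/-! ### The lower bound for the positive integral -/

/-- A Beta integral, obtained by writing `Γ(3/2) (1 + p²)^(-3/2)` as
`∫ √x e^{-(1 + p²)x} dx` and integrating over `p` first. -/
lemma beta_integral {β : ℝ} (hβ0 : -1 < β) (hβ1 : β < 1) :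
    IntegrableOn (fun p : ℝ => p ^ (1 - β) * (1 + p ^ 2) ^ (-(3 / 2) : ℝ)) (Set.Ioi 0) ∧
    Real.Gamma (3 / 2) * ∫ p in Set.Ioi (0 : ℝ), p ^ (1 - β) * (1 + p ^ 2) ^ (-(3 / 2) : ℝ)
      = Real.Gamma (1 - β / 2) * Real.Gamma ((1 + β) / 2) / 2 := by
  have hfac : ∀ x p : ℝ, x ^ (1 / 2 : ℝ) * Real.exp (-((1 + p ^ 2) * x)) * p ^ (1 - β)
      = x ^ (1 / 2 : ℝ) * Real.exp (-x) * (p ^ (1 - β) * Real.exp (-x * p ^ (2 : ℝ))) := by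
    intro x p
    rw [show -((1 + p ^ 2) * x) = -x + -x * p ^ (2 : ℝ) by rw [Real.rpow_two]; ring, Real.exp_add]
    ring
  have hinner : ∀ x ∈ Set.Ioi (0 : ℝ), ∫ p in Set.Ioi (0 : ℝ),
      x ^ (1 / 2 : ℝ) * Real.exp (-((1 + p ^ 2) * x)) * p ^ (1 - β)
      = Real.Gamma (1 - β / 2) / 2 * (Real.exp (-x) * x ^ ((1 + β) / 2 - 1)) := by
    intro x hx
    simp_rw [hfac]
    rw [integral_const_mul, integral_rpow_mul_exp_neg_mul_rpow two_pos (by linarith) hx,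
      show (1 + β) / 2 - 1 = 1 / 2 + -(1 - β + 1) / 2 by ring, Real.rpow_add hx,
      show (1 - β + 1) / 2 = 1 - β / 2 by ring]
    ring
  have hint : Integrable (Function.uncurry fun x p : ℝ =>
      x ^ (1 / 2 : ℝ) * Real.exp (-((1 + p ^ 2) * x)) * p ^ (1 - β))
      ((volume.restrict (Set.Ioi 0)).prod (volume.restrict (Set.Ioi 0))) := by
    rw [integrable_prod_iff (Measurable.aestronglyMeasurable
      (by unfold Function.uncurry; fun_prop))]
    constructor
    · filter_upwards [ae_restrict_mem measurableSet_Ioi] with x hx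
      simp only [Function.uncurry, hfac]
      exact (integrableOn_rpow_mul_exp_neg_mul_rpow (by linarith) two_pos hx).const_mul _
    · have hdom : IntegrableOn (fun x : ℝ => Real.Gamma (1 - β / 2) / 2 *
          (Real.exp (-x) * x ^ ((1 + β) / 2 - 1))) (Set.Ioi 0) :=
        (Real.GammaIntegral_convergent (by linarith)).const_mul _
      refine (integrableOn_congr_fun (fun x hx => ?_) measurableSet_Ioi).mpr hdom
      rw [← hinner x hx]
      refine setIntegral_congr_fun measurableSet_Ioi fun p hp => ?_
      have hx' : 0 < x := hx
      have hp' : 0 < p := hp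
      exact Real.norm_of_nonneg (by simp only [Function.uncurry]; positivity)
  have hinner' : ∀ p ∈ Set.Ioi (0 : ℝ), ∫ x in Set.Ioi (0 : ℝ),
      x ^ (1 / 2 : ℝ) * Real.exp (-((1 + p ^ 2) * x)) * p ^ (1 - β)
      = Real.Gamma (3 / 2) * (p ^ (1 - β) * (1 + p ^ 2) ^ (-(3 / 2) : ℝ)) := by
    intro p hp
    have h := Real.integral_rpow_mul_exp_neg_mul_Ioi (a := 3 / 2) (r := 1 + p ^ 2)
      (by norm_num) (by positivity)
    rw [one_div, Real.inv_rpow (by positivity), ← Real.rpow_neg (by positivity),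
      show (3 / 2 - 1 : ℝ) = 1 / 2 by norm_num] at h
    rw [integral_mul_const, h]
    ring
  have hG : Real.Gamma (3 / 2) ≠ 0 := (Real.Gamma_pos_of_pos (by norm_num)).ne'
  constructor
  · have h := (integrableOn_congr_fun hinner' measurableSet_Ioi).mp hint.integral_prod_right
    exact (integrable_const_mul_iff hG.isUnit _).mp h
  · rw [← integral_const_mul, ← setIntegral_congr_fun measurableSet_Ioi hinner',
      ← integral_integral_swap hint, setIntegral_congr_fun measurableSet_Ioi hinner,
      integral_const_mul, ← Real.Gamma_eq_integral (by linarith)]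
    ring

/-- At least half of the Beta integral comes from `p > 1`: under `p ↦ p⁻¹` the part over
`(0, 1)` becomes the integral of `p^β (1 + p²)^(-3/2)` over `p > 1`, and `p^β ≤ p^(1-β)` there
because `β ≤ 1 - β`. -/
lemma half_le_tail {β : ℝ} (hβ0 : 0 < β) (hβ1 : β < 1 / 2) :
    (∫ p in Set.Ioi (0 : ℝ), p ^ (1 - β) * (1 + p ^ 2) ^ (-(3 / 2) : ℝ)) / 2
      ≤ ∫ p in Set.Ioi (1 : ℝ), p ^ (1 - β) * (1 + p ^ 2) ^ (-(3 / 2) : ℝ) := by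
  have hint := (beta_integral (β := β) (by linarith) (by linarith)).1
  have hint' := (beta_integral (β := 1 - β) (by linarith) (by linarith)).1
  rw [sub_sub_cancel] at hint'
  have hIoi : Set.Ioi (1 : ℝ) ⊆ Set.Ioi 0 := Set.Ioi_subset_Ioi zero_le_one
  have hsplit : ∫ p in Set.Ioi (0 : ℝ), p ^ (1 - β) * (1 + p ^ 2) ^ (-(3 / 2) : ℝ)
      = (∫ p in Set.Ioc (0 : ℝ) 1, p ^ (1 - β) * (1 + p ^ 2) ^ (-(3 / 2) : ℝ))
      + ∫ p in Set.Ioi (1 : ℝ), p ^ (1 - β) * (1 + p ^ 2) ^ (-(3 / 2) : ℝ) := by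
    rw [← Set.Ioc_union_Ioi_eq_Ioi zero_le_one]
    exact setIntegral_union (Set.Ioc_disjoint_Ioi le_rfl) measurableSet_Ioi
      (hint.mono_set Set.Ioc_subset_Ioi_self) (hint.mono_set hIoi)
  -- the substitution `p ↦ p⁻¹` carries `Ioc 0 1` to `Ici 1`
  have hinv : ∫ p in Set.Ioc (0 : ℝ) 1, p ^ (1 - β) * (1 + p ^ 2) ^ (-(3 / 2) : ℝ)
      = ∫ p in Set.Ioi (1 : ℝ), p ^ β * (1 + p ^ 2) ^ (-(3 / 2) : ℝ) := by
    have h := integral_comp_rpow_Ioi ((Set.Ioc (0 : ℝ) 1).indicator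
      fun p => p ^ (1 - β) * (1 + p ^ 2) ^ (-(3 / 2) : ℝ)) (p := -1) (by norm_num)
    rw [setIntegral_indicator measurableSet_Ioc,
      Set.inter_eq_self_of_subset_right Set.Ioc_subset_Ioi_self] at h
    rw [← h, ← integral_Ici_eq_integral_Ioi (x := (1 : ℝ))]
    rw [← Set.inter_eq_self_of_subset_right (Set.Ici_subset_Ioi.mpr (zero_lt_one (α := ℝ))),
      ← setIntegral_indicator measurableSet_Ici]
    refine setIntegral_congr_fun measurableSet_Ioi fun p hp => ?_
    have hp' : 0 < p := hp
    simp only [Real.rpow_neg_one, smul_eq_mul]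
    by_cases h1 : 1 ≤ p
    · rw [Set.indicator_of_mem (show p⁻¹ ∈ Set.Ioc (0 : ℝ) 1 from
        ⟨by positivity, inv_le_one_of_one_le₀ h1⟩), Set.indicator_of_mem (Set.mem_Ici.mpr h1)]
      have hq : 1 + p⁻¹ ^ 2 = (1 + p ^ 2) / p ^ (2 : ℝ) := by
        rw [Real.rpow_two]; field_simp; ring
      rw [hq, Real.div_rpow (by positivity) (by positivity), ← Real.rpow_mul hp'.le,
        Real.inv_rpow hp'.le, ← Real.rpow_neg hp'.le, div_eq_mul_inv, ← Real.rpow_neg hp'.le]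
      have : p ^ β = p ^ (-1 - 1 : ℝ) * p ^ (-(1 - β)) * p ^ (-(2 * (-(3 / 2))) : ℝ) := by
        rw [← Real.rpow_add hp', ← Real.rpow_add hp']; congr 1; ring
      rw [this]
      norm_num
      ring
    · rw [Set.indicator_of_notMem (fun h => h1 ((inv_le_one₀ hp').mp h.2)),
        Set.indicator_of_notMem (show p ∉ Set.Ici (1 : ℝ) from h1)]
      simp
  have hle : ∫ p in Set.Ioi (1 : ℝ), p ^ β * (1 + p ^ 2) ^ (-(3 / 2) : ℝ)
      ≤ ∫ p in Set.Ioi (1 : ℝ), p ^ (1 - β) * (1 + p ^ 2) ^ (-(3 / 2) : ℝ) := by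
    refine setIntegral_mono_on (hint'.mono_set hIoi) (hint.mono_set hIoi) measurableSet_Ioi
      fun p hp => ?_
    have hp' : 1 < p := hp
    refine mul_le_mul_of_nonneg_right ?_ (by positivity)
    exact Real.rpow_le_rpow_of_exponent_le hp'.le (by linarith)
  linarith

/-- After the substitution `p = u + s`, this keeps only the part `p > 1` and uses
`(p - u)^(-β) ≥ p^(-β)`. -/
lemma tail_le_shifted {u β : ℝ} (hu0 : 0 < u) (hu1 : u < 1) (hβ0 : 0 < β)
    (hint : IntegrableOn (fun s : ℝ =>
      s ^ (-β) * ((u + s) * (1 + (u + s) ^ 2) ^ (-(3 / 2) : ℝ))) (Set.Ioi 0))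
    (hint' : IntegrableOn (fun p : ℝ => p ^ (1 - β) * (1 + p ^ 2) ^ (-(3 / 2) : ℝ)) (Set.Ioi 0)) :
    ∫ p in Set.Ioi (1 : ℝ), p ^ (1 - β) * (1 + p ^ 2) ^ (-(3 / 2) : ℝ)
      ≤ ∫ s in Set.Ioi (0 : ℝ), s ^ (-β) * ((u + s) * (1 + (u + s) ^ 2) ^ (-(3 / 2) : ℝ)) := by
  have hmp := measurePreserving_add_left (volume : Measure ℝ) u
  have hemb : MeasurableEmbedding (fun s : ℝ => u + s) := measurableEmbedding_addLeft u
  have hpre : (fun s : ℝ => u + s) ⁻¹' Set.Ioi 1 = Set.Ioi (1 - u) := by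
    ext s; simp [sub_lt_iff_lt_add']
  have hsub : Set.Ioi (1 - u) ⊆ Set.Ioi 0 := Set.Ioi_subset_Ioi (by linarith)
  have hI := (hmp.integrableOn_comp_preimage hemb).mpr
    (hint'.mono_set (Set.Ioi_subset_Ioi zero_le_one : Set.Ioi (1 : ℝ) ⊆ Set.Ioi 0))
  rw [← hmp.setIntegral_preimage_emb hemb, hpre]
  rw [hpre] at hI
  calc _ ≤ ∫ s in Set.Ioi (1 - u), s ^ (-β) * ((u + s) * (1 + (u + s) ^ 2) ^ (-(3 / 2) : ℝ)) := by
        refine setIntegral_mono_on hI (hint.mono_set hsub) measurableSet_Ioi fun s hs => ?_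
        have hs' : 0 < s := hsub hs
        rw [← mul_assoc]
        refine mul_le_mul_of_nonneg_right ?_ (by positivity)
        rw [sub_eq_neg_add, Real.rpow_add_one (by positivity)]
        refine mul_le_mul_of_nonneg_right ?_ (by positivity)
        exact Real.rpow_le_rpow_of_nonpos hs' (by linarith) (by linarith)
    _ ≤ _ := by
        refine setIntegral_mono_set hint ?_ hsub.eventuallyLE
        filter_upwards [ae_restrict_mem measurableSet_Ioi] with s hs
        have hs' : 0 < s := hs
        simp only [Pi.zero_apply]
        positivity

/-- Legendre's duplication formula at `α / 2` and `1 - α / 2` identifies the claimed lower bound,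
multiplied by `Γ(2 - α) Γ(3/2)`, with half the value given by `beta_integral` for
`β = α - 1`. -/
lemma gamma_identity {α : ℝ} (hα1 : 1 < α) (hα2 : α < 2) :
    Real.Gamma α * Real.Gamma (1 / 2) / (2 * Real.Gamma (1 - α / 2) * Real.Gamma ((α + 1) / 2))
      * (Real.Gamma (1 - (α - 1)) * Real.Gamma (3 / 2))
      = Real.Gamma (1 - (α - 1) / 2) * Real.Gamma ((1 + (α - 1)) / 2) / 2 / 2 := by
  have h1 := Real.Gamma_mul_Gamma_add_half (α / 2)
  have h2 := Real.Gamma_mul_Gamma_add_half (1 - α / 2)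
  have h3 : Real.Gamma (3 / 2) = 1 / 2 * √Real.pi := by
    rw [show (3 / 2 : ℝ) = 1 / 2 + 1 by norm_num, Real.Gamma_add_one (by norm_num),
      Real.Gamma_one_half_eq]
  have hpow : (2 : ℝ) ^ (1 - 2 * (α / 2)) * 2 ^ (1 - 2 * (1 - α / 2)) = 1 := by
    rw [← Real.rpow_add two_pos, show 1 - 2 * (α / 2) + (1 - 2 * (1 - α / 2)) = 0 by ring,
      Real.rpow_zero]
  rw [h3, Real.Gamma_one_half_eq, show 1 - (α - 1) / 2 = 1 - α / 2 + 1 / 2 by ring,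
    show (1 + (α - 1)) / 2 = α / 2 by ring, show (α + 1) / 2 = α / 2 + 1 / 2 by ring,
    show 1 - (α - 1) = 2 * (1 - α / 2) by ring]
  rw [show 2 * (α / 2) = α by ring] at h1
  rw [show 2 * (α / 2) = α by ring] at hpow
  have g1 : 0 < Real.Gamma (1 - α / 2) := Real.Gamma_pos_of_pos (by linarith)
  have g2 : 0 < Real.Gamma (α / 2 + 1 / 2) := Real.Gamma_pos_of_pos (by linarith)
  have hprod := congrArg₂ (· * ·) h1 h2
  have : Real.Gamma α * (√Real.pi * √Real.pi) * Real.Gamma (2 * (1 - α / 2))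
      = Real.Gamma (α / 2) * Real.Gamma (α / 2 + 1 / 2) *
        (Real.Gamma (1 - α / 2) * Real.Gamma (1 - α / 2 + 1 / 2)) := by
    linear_combination -hprod - (Real.Gamma α * (√Real.pi * √Real.pi) *
      Real.Gamma (2 * (1 - α / 2))) * hpow
  clear hprod h1 h2
  generalize Real.Gamma (1 - α / 2) = a at *
  generalize Real.Gamma (α / 2 + 1 / 2) = b at *
  generalize Real.Gamma (2 * (1 - α / 2)) = c at *
  generalize Real.Gamma (1 - α / 2 + 1 / 2) = d at *
  generalize Real.Gamma (α / 2) = e at *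
  rw [div_mul_eq_mul_div, div_eq_iff (by positivity)]
  linear_combination this / 2

/-- For `1 < α < 4/3` and `0 < u < 1`,
`∫₀^∞ e^{−ut} t^{α−1} J₀(t) dt ≥ Γ(α) Γ(1/2) / (2 Γ(1 − α/2) Γ((α+1)/2))`,
and this lower bound is strictly positive. -/
theorem integral_exp_besselJ_zero_lower_bound (α u : ℝ)
    (hα1 : 1 < α) (hα2 : α < 4 / 3) (hu0 : 0 < u) (hu1 : u < 1) :
    Real.Gamma α * Real.Gamma (1 / 2) / (2 * Real.Gamma (1 - α / 2) * Real.Gamma ((α + 1) / 2))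
        ≤ ∫ t in Set.Ioi (0 : ℝ), Real.exp (-u * t) * t ^ (α - 1) * besselJ 0 t ∧
      0 < Real.Gamma α * Real.Gamma (1 / 2)
        / (2 * Real.Gamma (1 - α / 2) * Real.Gamma ((α + 1) / 2)) := by
  have g1 : 0 < Real.Gamma α := Real.Gamma_pos_of_pos (by linarith)
  have g2 : 0 < Real.Gamma (1 / 2) := Real.Gamma_pos_of_pos (by norm_num)
  have g3 : 0 < Real.Gamma (1 - α / 2) := Real.Gamma_pos_of_pos (by linarith)
  have g4 : 0 < Real.Gamma ((α + 1) / 2) := Real.Gamma_pos_of_pos (by linarith)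
  refine ⟨?_, by positivity⟩
  have g5 : 0 < Real.Gamma (1 - (α - 1)) := Real.Gamma_pos_of_pos (by linarith)
  have g6 : 0 < Real.Gamma (3 / 2) := Real.Gamma_pos_of_pos (by norm_num)
  obtain ⟨hint, hsub⟩ := subordination (u := u) (β := α - 1) hu0 (by linarith) (by linarith)
  obtain ⟨hint', hbeta⟩ := beta_integral (β := α - 1) (by linarith) (by linarith)
  have hhalf := half_le_tail (β := α - 1) (by linarith) (by linarith)
  have htail := tail_le_shifted hu0 hu1 (by linarith) hint hint'
  refine le_of_mul_le_mul_right ?_ (mul_pos g5 g6)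
  rw [gamma_identity hα1 (by linarith), ← hbeta]
  calc _ ≤ Real.Gamma (3 / 2) * ∫ s in Set.Ioi (0 : ℝ),
        s ^ (-(α - 1)) * ((u + s) * (1 + (u + s) ^ 2) ^ (-(3 / 2) : ℝ)) := by
        rw [mul_div_assoc]
        exact mul_le_mul_of_nonneg_left (hhalf.trans htail) g6.le
    _ = _ := by rw [← hsub]; ring
end

section
/- For every α with 1 < α < 4/3, the hypergeometric series ₂F₁(α/2, (1−α)/2; 1; z) converges for all z ∈ [0, 1], and for every z ∈ [0, 1] one has ₂F₁(α/2, (1−α)/2; 1; z) ≥ Γ(1/2) / ( Γ(1 − α/2) Γ((1+α)/2) ). -/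
/-!
Put `a = α/2 > 0` and `b = (1-α)/2 ∈ (-1, 0)`, so `a + b = 1/2`. All terms of the series except
the zeroth are nonpositive, so on `[0, 1]` the sum is smallest at `z = 1`, where Gauss's summation
formula gives exactly the claimed bound.

Gauss's formula is proved through the contiguous relation in the lower parameter. Writing
`F_n = ₂F₁(a, b; n+1; 1)` with terms `t_l`, the difference
`(n+1)(n+1/2) t_l(n) - (n+1-a)(n+1-b) t_l(n+1)` telescopes to
`-(n+1) ((l+1) t_{l+1}(n) - l t_l(n))`, and `l t_l(n) → 0`
(`tendsto_mul_hypTerm`), hence `(n+1)(n+1/2) F_n = (n+1-a)(n+1-b) F_{n+1}`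
(`tsum_hypTerm_recurrence`). Iterating, `F_0` is a finite product times `F_n`; the product is a
ratio of Euler's Gamma sequences and converges to `Γ(1/2) / (Γ(1-a) Γ(1-b))`, and `F_n → 1`.
Summability at `z = 1` comes from the same telescoping: `-l t_l` is nonnegative and decreases by at
least `-t_l / 4` at each step.
-/

/-- A term of the Gauss hypergeometric series: `(ξ)_l (ζ)_l / ((η)_l l!) z^l`. -/
noncomputable def hypTerm (ξ ζ η z : ℝ) (l : ℕ) : ℝ :=
  ((ascPochhammer ℝ l).eval ξ * (ascPochhammer ℝ l).eval ζ)
    / ((ascPochhammer ℝ l).eval η * l.factorial) * z ^ l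

open Filter Topology

/-! ### Term recurrences, signs and bounds -/

lemma hypTerm_zero (a b c z : ℝ) : hypTerm a b c z 0 = 1 := by
  simp [hypTerm]

lemma hypTerm_succ (a b z : ℝ) (n l : ℕ) :
    hypTerm a b (n + 1) z (l + 1) =
      hypTerm a b (n + 1) z l * ((a + l) * (b + l) / ((n + 1 + l) * (l + 1)) * z) := by
  have hp : (ascPochhammer ℝ l).eval ((n : ℝ) + 1) ≠ 0 :=
    (ascPochhammer_pos l _ (by positivity)).ne'
  have h1 : ((n : ℝ) + 1 + l) ≠ 0 := by positivity
  have h2 : ((l : ℝ) + 1) ≠ 0 := by positivity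
  have h3 : (l.factorial : ℝ) ≠ 0 := by positivity
  simp only [hypTerm, ascPochhammer_succ_eval, Nat.factorial_succ, pow_succ]
  push_cast
  field_simp

lemma hypTerm_succ_left (a b z : ℝ) (n l : ℕ) :
    hypTerm a b ((n + 1 : ℕ) + 1) z l = hypTerm a b (n + 1) z l * ((n + 1) / (n + 1 + l)) := by
  induction l with
  | zero =>
    have h1 : ((n : ℝ) + 1) ≠ 0 := by positivity
    simp [hypTerm_zero, h1]
  | succ l ih =>
    rw [hypTerm_succ, hypTerm_succ, ih]
    have h1 : ((n : ℝ) + 1 + l) ≠ 0 := by positivity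
    have h2 : ((n : ℝ) + 1 + (l + 1)) ≠ 0 := by positivity
    have h3 : ((l : ℝ) + 1) ≠ 0 := by positivity
    have h4 : ((n : ℝ) + 1 + 1 + l) ≠ 0 := by positivity
    push_cast
    field_simp
    ring

lemma hypTerm_nonpos {a b : ℝ} (ha : 0 < a) (hb : b ≤ 0) (hb' : -1 < b) (n l : ℕ) :
    hypTerm a b (n + 1) 1 (l + 1) ≤ 0 := by
  induction l with
  | zero =>
    rw [hypTerm_succ, hypTerm_zero]
    have : a * b / ((n : ℝ) + 1) ≤ 0 :=
      div_nonpos_of_nonpos_of_nonneg (mul_nonpos_of_nonneg_of_nonpos ha.le hb) (by positivity)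
    simpa using this
  | succ l ih =>
    rw [hypTerm_succ]
    refine mul_nonpos_of_nonpos_of_nonneg ih ?_
    have : 0 ≤ b + ((l + 1 : ℕ) : ℝ) := by push_cast; linarith [(Nat.cast_nonneg l : (0 : ℝ) ≤ l)]
    positivity

lemma neg_hypTerm_le {a b : ℝ} (ha : 0 < a) (hb : b ≤ 0) (hb' : -1 < b) (n l : ℕ) :
    -hypTerm a b (n + 1) 1 (l + 1) ≤ -hypTerm a b 1 1 (l + 1) * (1 / (n + 1)) := by
  induction n with
  | zero => simp
  | succ n ih =>
    rw [hypTerm_succ_left]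
    have h0 := hypTerm_nonpos ha hb hb' 0 l
    simp only [Nat.cast_zero, zero_add] at h0
    have hl : (0 : ℝ) ≤ l := Nat.cast_nonneg l
    have h1 : ((n : ℝ) + 1) / (n + 1 + (l + 1 : ℕ)) ≤ (n + 1) / (n + 2) := by
      push_cast
      exact div_le_div_of_nonneg_left (by positivity) (by positivity) (by linarith)
    calc -(hypTerm a b (n + 1) 1 (l + 1) * (((n : ℝ) + 1) / (n + 1 + (l + 1 : ℕ))))
        = -hypTerm a b (n + 1) 1 (l + 1) * (((n : ℝ) + 1) / (n + 1 + (l + 1 : ℕ))) := by ring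
      _ ≤ (-hypTerm a b 1 1 (l + 1) * (1 / (n + 1))) * (((n : ℝ) + 1) / (n + 2)) := by
          refine mul_le_mul ih h1 (by positivity) ?_
          exact mul_nonneg (by linarith) (by positivity)
      _ = _ := by
          push_cast
          field_simp
          ring

/-! ### Summability at `z = 1` -/

/-- The telescoping step at lower parameter `1`, in the form of a bound on partial sums. -/
lemma sum_neg_hypTerm_le {a b : ℝ} (ha : 0 < a) (hb : b ≤ 0) (hb' : -1 < b)
    (hab : a + b = 1 / 2) (N : ℕ) :
    ∑ l ∈ Finset.range N, -hypTerm a b 1 1 (l + 1) ≤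
      4 * (-(a * b) - (N + 1) * -hypTerm a b 1 1 (N + 1)) := by
  have h0 : ∀ l, hypTerm a b 1 1 (l + 1) ≤ 0 := fun l => by
    simpa using hypTerm_nonpos ha hb hb' 0 l
  have hs : ∀ l, hypTerm a b 1 1 (l + 1) =
      hypTerm a b 1 1 l * ((a + l) * (b + l) / ((1 + l) * (l + 1)) * 1) := fun l => by
    simpa using hypTerm_succ a b 1 0 l
  induction N with
  | zero => simp [hs 0, hypTerm_zero]
  | succ N ih =>
    rw [Finset.sum_range_succ, hs (N + 1)]
    have h := h0 N
    set t := hypTerm a b 1 1 (N + 1)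
    have hN : (0 : ℝ) ≤ N := Nat.cast_nonneg N
    have key : (((N + 1 : ℕ) : ℝ) + 1) *
        -(t * ((a + (N + 1 : ℕ)) * (b + (N + 1 : ℕ)) / ((1 + (N + 1 : ℕ)) * ((N + 1 : ℕ) + 1)) * 1))
        = (N + 1) * -t - -t * (((N + 1) / 2 - a * b) / (N + 2)) := by
      have h2 : (N : ℝ) + 2 ≠ 0 := by positivity
      have h3 : (1 : ℝ) + (N + 1) ≠ 0 := by positivity
      have h4 : (N : ℝ) + 1 + 1 ≠ 0 := by positivity
      have hb2 : b = 1 / 2 - a := by linarith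
      subst hb2
      push_cast
      field_simp
      ring
    have hq : 1 / 4 ≤ (((N : ℝ) + 1) / 2 - a * b) / (N + 2) := by
      rw [le_div_iff₀ (by positivity)]
      nlinarith [mul_nonneg ha.le (neg_nonneg.2 hb)]
    rw [key]
    nlinarith [mul_le_mul_of_nonneg_left hq (neg_nonneg.2 h)]

lemma summable_hypTerm_one {a b : ℝ} (ha : 0 < a) (hb : b ≤ 0) (hb' : -1 < b)
    (hab : a + b = 1 / 2) : Summable fun l => -hypTerm a b 1 1 (l + 1) := by
  have h0 : ∀ l, hypTerm a b 1 1 (l + 1) ≤ 0 := fun l => by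
    simpa using hypTerm_nonpos ha hb hb' 0 l
  refine summable_of_sum_range_le (c := 4 * -(a * b)) (fun l => neg_nonneg.2 (h0 l)) fun N => ?_
  refine (sum_neg_hypTerm_le ha hb hb' hab N).trans ?_
  have : 0 ≤ ((N : ℝ) + 1) * -hypTerm a b 1 1 (N + 1) :=
    mul_nonneg (by positivity) (neg_nonneg.2 (h0 N))
  linarith

lemma summable_hypTerm {a b : ℝ} (ha : 0 < a) (hb : b ≤ 0) (hb' : -1 < b)
    (hab : a + b = 1 / 2) (n : ℕ) : Summable fun l => hypTerm a b (n + 1) 1 l := by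
  rw [← summable_nat_add_iff 1, ← summable_neg_iff]
  exact Summable.of_nonneg_of_le (fun l => neg_nonneg.2 (hypTerm_nonpos ha hb hb' n l))
    (fun l => neg_hypTerm_le ha hb hb' n l) ((summable_hypTerm_one ha hb hb' hab).mul_right _)

/-! ### Gauss's summation formula -/

lemma hypTerm_telescope {a b : ℝ} (hab : a + b = 1 / 2) (n l : ℕ) :
    ((n + 1 - a) * (n + 1 - b) * hypTerm a b ((n + 1 : ℕ) + 1) 1 l
      - (n + 1) * (n + 1 / 2) * hypTerm a b (n + 1) 1 l) / (n + 1) =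
      ((l + 1 : ℕ) : ℝ) * hypTerm a b (n + 1) 1 (l + 1) - l * hypTerm a b (n + 1) 1 l := by
  rw [hypTerm_succ_left, hypTerm_succ]
  have h1 : ((n : ℝ) + 1 + l) ≠ 0 := by positivity
  have h2 : ((n : ℝ) + 1) ≠ 0 := by positivity
  have h3 : ((l : ℝ) + 1) ≠ 0 := by positivity
  have hb2 : b = 1 / 2 - a := by linarith
  subst hb2
  push_cast
  field_simp
  ring

/-- The sequence `l t_l` converges because its increments are summable, and a nonzero limit would
make `t_l` comparable to the harmonic series. -/
lemma tendsto_mul_hypTerm {a b : ℝ} (ha : 0 < a) (hb : b ≤ 0) (hb' : -1 < b)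
    (hab : a + b = 1 / 2) (n : ℕ) :
    Tendsto (fun l : ℕ => (l : ℝ) * hypTerm a b (n + 1) 1 l) atTop (𝓝 0) := by
  have hs := summable_hypTerm ha hb hb' hab n
  have hs' := summable_hypTerm ha hb hb' hab (n + 1)
  have hd := ((hs'.mul_left (((n : ℝ) + 1 - a) * (n + 1 - b))).sub
    (hs.mul_left (((n : ℝ) + 1) * (n + 1 / 2)))).div_const ((n : ℝ) + 1)
  simp only [hypTerm_telescope hab] at hd
  have ht := hd.hasSum.tendsto_sum_nat
  simp only [Finset.sum_range_sub (fun l : ℕ => (l : ℝ) * hypTerm a b (n + 1) 1 l),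
    Nat.cast_zero, zero_mul, sub_zero] at ht
  set L := ∑' l : ℕ, (((l + 1 : ℕ) : ℝ) * hypTerm a b (n + 1) 1 (l + 1)
    - l * hypTerm a b (n + 1) 1 l)
  by_cases hL : L = 0
  · rwa [hL] at ht
  · exfalso
    have hev : ∀ᶠ l : ℕ in atTop, |L| / 2 < |(l : ℝ) * hypTerm a b (n + 1) 1 l| :=
      ht.abs.eventually_const_lt (by linarith [abs_pos.2 hL])
    have : Summable fun l : ℕ => |L| / 2 * (1 / (l : ℝ)) := by
      refine Summable.of_norm_bounded_eventually_nat hs.abs ?_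
      filter_upwards [hev, eventually_gt_atTop 0] with l hl hl0
      have hl0' : (0 : ℝ) < l := by exact_mod_cast hl0
      rw [Real.norm_of_nonneg (by positivity), mul_one_div, div_le_iff₀ hl0']
      rw [abs_mul, abs_of_pos hl0'] at hl
      linarith
    rw [summable_mul_left_iff (by simpa using hL)] at this
    exact Real.not_summable_one_div_natCast this

lemma tsum_hypTerm_recurrence {a b : ℝ} (ha : 0 < a) (hb : b ≤ 0) (hb' : -1 < b)
    (hab : a + b = 1 / 2) (n : ℕ) :
    (n + 1) * (n + 1 / 2) * ∑' l, hypTerm a b (n + 1) 1 l =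
      (n + 1 - a) * (n + 1 - b) * ∑' l, hypTerm a b ((n + 1 : ℕ) + 1) 1 l := by
  have hs := summable_hypTerm ha hb hb' hab n
  have hs' := summable_hypTerm ha hb hb' hab (n + 1)
  have hd := ((hs'.hasSum.mul_left (((n : ℝ) + 1 - a) * (n + 1 - b))).sub
    (hs.hasSum.mul_left (((n : ℝ) + 1) * (n + 1 / 2)))).div_const ((n : ℝ) + 1)
  simp only [hypTerm_telescope hab] at hd
  have ht := hd.tendsto_sum_nat
  simp only [Finset.sum_range_sub (fun l : ℕ => (l : ℝ) * hypTerm a b (n + 1) 1 l),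
    Nat.cast_zero, zero_mul, sub_zero] at ht
  have h := tendsto_nhds_unique ht (tendsto_mul_hypTerm ha hb hb' hab n)
  have h2 : ((n : ℝ) + 1) ≠ 0 := by positivity
  rw [div_eq_zero_iff, or_iff_left h2] at h
  linarith

lemma tendsto_tsum_hypTerm {a b : ℝ} (ha : 0 < a) (hb : b ≤ 0) (hb' : -1 < b)
    (hab : a + b = 1 / 2) :
    Tendsto (fun n : ℕ => ∑' l, hypTerm a b (n + 1) 1 l) atTop (𝓝 1) := by
  have h1 := summable_hypTerm_one ha hb hb' hab
  have heq : ∀ n : ℕ, ∑' l, hypTerm a b (n + 1) 1 l =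
      1 - ∑' l, -hypTerm a b (n + 1) 1 (l + 1) := fun n => by
    rw [(summable_hypTerm ha hb hb' hab n).tsum_eq_zero_add, hypTerm_zero, tsum_neg]
    ring
  simp only [heq]
  have : Tendsto (fun n : ℕ => ∑' l, -hypTerm a b (n + 1) 1 (l + 1)) atTop (𝓝 0) := by
    have hz := (tendsto_one_div_add_atTop_nhds_zero_nat (𝕜 := ℝ)).const_mul
      (∑' l, -hypTerm a b 1 1 (l + 1))
    rw [mul_zero] at hz
    refine tendsto_of_tendsto_of_tendsto_of_le_of_le tendsto_const_nhds hz
      (fun n => tsum_nonneg fun l => neg_nonneg.2 (hypTerm_nonpos ha hb hb' n l)) fun n => ?_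
    simp only
    rw [← tsum_mul_right]
    refine Summable.tsum_le_tsum (fun l => neg_hypTerm_le ha hb hb' n l) ?_ (h1.mul_right _)
    exact ((summable_nat_add_iff 1).2 (summable_hypTerm ha hb hb' hab n)).neg
  simpa using this.const_sub 1

/-- Iterating the recurrence turns `F_0` into a ratio of Euler's Gamma sequences times `F_{n+1}`. -/
lemma tsum_eq_GammaSeq_mul {a b : ℝ} (ha : 0 < a) (ha' : a < 1) (hb : b ≤ 0) (hb' : -1 < b)
    (hab : a + b = 1 / 2) (n : ℕ) (hn : 0 < n) :
    ∑' l, hypTerm a b 1 1 l =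
      Real.GammaSeq 1 n * Real.GammaSeq (1 / 2) n /
        (Real.GammaSeq (1 - a) n * Real.GammaSeq (1 - b) n) *
        ∑' l, hypTerm a b ((n + 1 : ℕ) + 1) 1 l := by
  have hprod : ∀ N : ℕ, (∏ j ∈ Finset.range N, (1 + (j : ℝ))) *
      (∏ j ∈ Finset.range N, (1 / 2 + (j : ℝ))) * ∑' l, hypTerm a b 1 1 l =
      (∏ j ∈ Finset.range N, (1 - a + (j : ℝ))) *
      (∏ j ∈ Finset.range N, (1 - b + (j : ℝ))) * ∑' l, hypTerm a b (N + 1) 1 l := by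
    intro N
    induction N with
    | zero => simp
    | succ N ih =>
      simp only [Finset.prod_range_succ]
      linear_combination (1 + (N : ℝ)) * (1 / 2 + N) * ih +
        (∏ j ∈ Finset.range N, (1 - a + (j : ℝ))) * (∏ j ∈ Finset.range N, (1 - b + (j : ℝ))) *
          tsum_hypTerm_recurrence ha hb hb' hab N
  have hpos : ∀ s : ℝ, 0 < s → 0 < ∏ j ∈ Finset.range (n + 1), (s + (j : ℝ)) := fun s hs =>
    Finset.prod_pos fun j _ => by positivity
  have p1 := hpos 1 one_pos
  have p2 := hpos (1 / 2) (by norm_num)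
  have p3 := hpos (1 - a) (by linarith)
  have p4 := hpos (1 - b) (by linarith)
  have hn' : (0 : ℝ) < n := by exact_mod_cast hn
  -- The powers of `n` cancel because `1 + 1/2 = (1 - a) + (1 - b)`.
  have hpow : (n : ℝ) ^ (1 : ℝ) * (n : ℝ) ^ (1 / 2 : ℝ) = (n : ℝ) ^ (1 - a) * (n : ℝ) ^ (1 - b) := by
    rw [← Real.rpow_add hn', ← Real.rpow_add hn']
    congr 1
    linarith
  have q3 : 0 < (n : ℝ) ^ (1 - a) := by positivity
  have q4 : 0 < (n : ℝ) ^ (1 - b) := by positivity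
  have hf : (0 : ℝ) < n.factorial := by positivity
  have h := hprod (n + 1)
  simp only [Real.GammaSeq]
  generalize (∏ j ∈ Finset.range (n + 1), (1 + (j : ℝ))) = P1 at *
  generalize (∏ j ∈ Finset.range (n + 1), (1 / 2 + (j : ℝ))) = P2 at *
  generalize (∏ j ∈ Finset.range (n + 1), (1 - a + (j : ℝ))) = P3 at *
  generalize (∏ j ∈ Finset.range (n + 1), (1 - b + (j : ℝ))) = P4 at *
  generalize (n : ℝ) ^ (1 - a) = Q3 at *
  generalize (n : ℝ) ^ (1 - b) = Q4 at *
  generalize (n : ℝ) ^ (1 : ℝ) = Q1 at *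
  generalize (n : ℝ) ^ (1 / 2 : ℝ) = Q2 at *
  generalize (n.factorial : ℝ) = f at *
  generalize ∑' l, hypTerm a b 1 1 l = F at *
  generalize ∑' l, hypTerm a b ((n + 1 : ℕ) + 1) 1 l = F' at *
  have hr : Q1 * f / P1 * (Q2 * f / P2) / (Q3 * f / P3 * (Q4 * f / P4)) =
      (Q1 * Q2) * (P3 * P4) / ((Q3 * Q4) * (P1 * P2)) := by
    field_simp
  rw [hr, hpow, mul_div_mul_left _ _ (mul_pos q3 q4).ne', div_mul_eq_mul_div,
    eq_div_iff (mul_pos p1 p2).ne']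
  linarith

/-- Gauss's summation formula in the case `c = 1`, `a + b = 1/2`. -/
lemma tsum_hypTerm_one {a b : ℝ} (ha : 0 < a) (ha' : a < 1) (hb : b ≤ 0) (hb' : -1 < b)
    (hab : a + b = 1 / 2) :
    ∑' l, hypTerm a b 1 1 l = Real.Gamma (1 / 2) / (Real.Gamma (1 - a) * Real.Gamma (1 - b)) := by
  have g3 : Real.Gamma (1 - a) ≠ 0 := (Real.Gamma_pos_of_pos (by linarith)).ne'
  have g4 : Real.Gamma (1 - b) ≠ 0 := (Real.Gamma_pos_of_pos (by linarith)).ne'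
  have hT := (((Real.GammaSeq_tendsto_Gamma 1).mul (Real.GammaSeq_tendsto_Gamma (1 / 2))).div
    ((Real.GammaSeq_tendsto_Gamma (1 - a)).mul (Real.GammaSeq_tendsto_Gamma (1 - b)))
    (mul_ne_zero g3 g4)).mul
    ((tendsto_tsum_hypTerm ha hb hb' hab).comp (tendsto_add_atTop_nat 1))
  rw [Real.Gamma_one, one_mul, mul_one] at hT
  refine tendsto_nhds_unique (tendsto_const_nhds.congr' ?_) hT
  filter_upwards [eventually_gt_atTop 0] with n hn
  exact tsum_eq_GammaSeq_mul ha ha' hb hb' hab n hn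

/-- For `1 < α < 4/3`, the hypergeometric series `₂F₁(α/2, (1−α)/2; 1; z)` converges
for every `z ∈ [0,1]`, and its sum is bounded below by `Γ(1/2) / (Γ(1 − α/2) Γ((1+α)/2))`. -/
theorem hyp2F1_lower_bound (α : ℝ) (hα1 : 1 < α) (hα2 : α < 4 / 3) :
    ∀ z ∈ Set.Icc (0 : ℝ) 1,
      Summable (fun l : ℕ => hypTerm (α / 2) ((1 - α) / 2) 1 z l) ∧
      Real.Gamma (1 / 2) / (Real.Gamma (1 - α / 2) * Real.Gamma ((1 + α) / 2))
        ≤ ∑' l : ℕ, hypTerm (α / 2) ((1 - α) / 2) 1 z l := by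
  rintro z ⟨hz0, hz1⟩
  have ha : 0 < α / 2 := by linarith
  have ha' : α / 2 < 1 := by linarith
  have hb : (1 - α) / 2 ≤ 0 := by linarith
  have hb' : -1 < (1 - α) / 2 := by linarith
  have hab : α / 2 + (1 - α) / 2 = 1 / 2 := by ring
  have hG := tsum_hypTerm_one ha ha' hb hb' hab
  have hs1 : Summable fun l => hypTerm (α / 2) ((1 - α) / 2) 1 1 l := by
    simpa using summable_hypTerm ha hb hb' hab 0
  have hb1 : 1 - (1 - α) / 2 = (1 + α) / 2 := by ring
  rw [hb1] at hG
  have hzterm : ∀ l, hypTerm (α / 2) ((1 - α) / 2) 1 z l =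
      hypTerm (α / 2) ((1 - α) / 2) 1 1 l * z ^ l := fun l => by simp [hypTerm]
  have hs : Summable fun l => hypTerm (α / 2) ((1 - α) / 2) 1 z l := by
    refine Summable.of_norm_bounded hs1.abs fun l => ?_
    rw [hzterm, norm_mul, Real.norm_eq_abs, Real.norm_of_nonneg (pow_nonneg hz0 l)]
    exact mul_le_of_le_one_right (abs_nonneg _) (pow_le_one₀ hz0 hz1)
  refine ⟨hs, ?_⟩
  rw [← hG]
  refine hs1.tsum_le_tsum (fun l => ?_) hs
  rw [hzterm]
  cases l with
  | zero => simp
  | succ l =>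
    have h := hypTerm_nonpos ha hb hb' 0 l
    simp only [Nat.cast_zero, zero_add] at h
    nlinarith [pow_le_one₀ (n := l + 1) hz0 hz1]
end

section
/- Let q ∈ (1, 2) and let β satisfy max{2/3, 2 − 2/q} < β < 1. Then ∫₀^∞ | ∫_{{z ∈ ℂ : |z| ≤ 1}} |z|^{−β} e^{i a Re(z)} dz |^q · a da = +∞. (The inner integral is, up to a positive constant, the matrix coefficient ⟨f̂_β(a) e₀, e₀⟩ of the group Fourier transform on the Euclidean motion group M(2) of the square-integrable compactly supported function f_β(z, e^{iφ}) = χ_{B₁(0)}(z) |z|^{−β}, evaluated at the constant function e₀ ∈ L²(S¹).) -/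
/-!
The matrix coefficient `coeff β` is radially the planar Fourier transform of
`f(z) = χ_{|z| ≤ 1} |z|^{-β}` (`coeff_norm`), and `a da` is, up to `2π`, the radial part of Lebesgue
measure, so the claim says that `f̂ ∉ L^q(ℂ)`. This is what the Hausdorff–Young inequality predicts,
since `f ∉ L^p` for the conjugate exponent `p` when `β > 2/p = 2 - 2/q`; testing against Gaussians
gives a direct proof.

Pair `f̂` with `e^{-s|w|²}`, for `0 < s ≤ 1`. By Fubini the pairing equals
`(π/s) ∫ f(z) e^{-|z|²/(4s)} dz` (`integral_coeff_mul_gaussian`), which is at least a constant times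
`s^{-β/2}` because of the disc `|z| ≤ √s` (`gaussian_lower_bound`). If `f̂` were in `L^q`, Hölder's
inequality would bound it by a constant times `s^{-1/p}` (`gaussian_upper_bound`). As
`β/2 > 1 - 1/q = 1/p`, this is impossible as `s → 0`.
-/

open MeasureTheory

open Set in
theorem integrableOn_rpow_norm {β : ℝ} (hβ : β < 1) :
    IntegrableOn (fun z : ℂ => ‖z‖ ^ (-β)) (Metric.closedBall (0 : ℂ) 1) := by
  have h : IntegrableOn (fun z : ℂ => ‖z‖ ^ (-β)) (Metric.ball (0 : ℂ) 2) := by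
    rw [integrableOn_fun_norm_addHaar volume (f := fun r : ℝ => r ^ (-β))]
    have h1 : IntegrableOn (fun r : ℝ => r ^ (1 - β)) (Ioo 0 2) :=
      (intervalIntegral.integrableOn_Ioo_rpow_iff (by norm_num)).2 (by linarith)
    refine h1.congr_fun (fun r hr => ?_) measurableSet_Ioo
    simp [Real.rpow_sub hr.1, Real.rpow_neg hr.1.le, div_eq_mul_inv]
  exact h.mono_set (Metric.closedBall_subset_ball (by norm_num))

/-- The matrix coefficient `∫_{|z| ≤ 1} |z|^{-β} e^{i a Re z} dz`. -/
noncomputable def coeff (β a : ℝ) : ℂ :=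
  ∫ z in Metric.closedBall (0 : ℂ) 1,
    ((‖z‖ ^ (-β) : ℝ) : ℂ) * Complex.exp (Complex.I * a * z.re)

theorem measurable_coeff (β : ℝ) : Measurable (coeff β) := by
  unfold coeff
  refine (StronglyMeasurable.integral_prod_right (ν := volume.restrict _)
    (Measurable.stronglyMeasurable ?_)).measurable
  unfold Function.uncurry
  fun_prop

/-- By rotation invariance, the planar Fourier transform of the truncated power at `w`
is `coeff β ‖w‖`. -/
theorem coeff_norm (β : ℝ) (w : ℂ) :
    coeff β ‖w‖ = ∫ z in Metric.closedBall (0 : ℂ) 1,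
      ((‖z‖ ^ (-β) : ℝ) : ℂ) * Complex.exp (Complex.I * (inner ℝ z w : ℝ)) := by
  obtain ⟨u, hu⟩ : ∃ u : Circle, w = u * ‖w‖ := by
    refine ⟨Circle.exp w.arg, ?_⟩
    rw [Circle.coe_exp, mul_comm]
    exact (Complex.norm_mul_exp_arg_mul_I w).symm
  have hp := (rotation u).measurePreserving.setIntegral_preimage_emb
    (rotation u).toHomeomorph.measurableEmbedding
    (fun z : ℂ => ((‖z‖ ^ (-β) : ℝ) : ℂ) * Complex.exp (Complex.I * (inner ℝ z w : ℝ)))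
    (Metric.closedBall (0 : ℂ) 1)
  rw [← hp, LinearIsometryEquiv.preimage_closedBall, map_zero, coeff]
  refine integral_congr_ae (Filter.Eventually.of_forall fun z => ?_)
  have h : inner ℝ (rotation u z) w = ‖w‖ * z.re := by
    have h1 : w = rotation u (‖w‖ : ℂ) := by rw [rotation_apply]; exact hu
    conv_lhs => rw [h1]
    rw [LinearIsometryEquiv.inner_map_map, Complex.inner]
    simp
  simp only [LinearIsometryEquiv.norm_map, h]
  push_cast
  rw [mul_assoc]

/-- The pairing with a Gaussian can be moved, by Fubini, to the side of the truncated power. -/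
theorem integral_coeff_mul_gaussian {β s : ℝ} (hβ : β < 1) (hs : 0 < s) :
    ∫ w : ℂ, coeff β ‖w‖ * (Real.exp (-s * ‖w‖ ^ 2) : ℝ) =
      ((Real.pi / s * ∫ z in Metric.closedBall (0 : ℂ) 1,
        ‖z‖ ^ (-β) * Real.exp (-‖z‖ ^ 2 / (4 * s)) : ℝ) : ℂ) := by
  have hs' : 0 < (s : ℂ).re := by simpa using hs
  have hg : Integrable (fun w : ℂ => ((Real.exp (-s * ‖w‖ ^ 2) : ℝ) : ℂ)) := by
    have := GaussianFourier.integrable_cexp_neg_mul_sq_norm_add hs' 0 (0 : ℂ)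
    simpa using this
  have hprod : Integrable (fun p : ℂ × ℂ =>
      ((‖p.2‖ ^ (-β) : ℝ) : ℂ) * Complex.exp (Complex.I * (inner ℝ p.2 p.1 : ℝ)) *
        (Real.exp (-s * ‖p.1‖ ^ 2) : ℝ))
      (volume.prod (volume.restrict (Metric.closedBall (0 : ℂ) 1))) := by
    have h := hg.mul_prod (Integrable.ofReal (𝕜 := ℂ) (integrableOn_rpow_norm hβ))
    refine h.mono (Measurable.aestronglyMeasurable (by fun_prop)) ?_
    refine Filter.Eventually.of_forall fun x => le_of_eq ?_
    simp only [norm_mul, Complex.norm_exp_I_mul_ofReal]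
    rw [mul_one, mul_comm]
    rfl
  simp_rw [coeff_norm, ← integral_mul_const]
  rw [integral_integral_swap hprod]
  have key : ∀ z : ℂ, ∫ w : ℂ, ((‖z‖ ^ (-β) : ℝ) : ℂ) *
        Complex.exp (Complex.I * (inner ℝ z w : ℝ)) * (Real.exp (-s * ‖w‖ ^ 2) : ℝ) =
      ((Real.pi / s * (‖z‖ ^ (-β) * Real.exp (-‖z‖ ^ 2 / (4 * s))) : ℝ) : ℂ) := by
    intro z
    have h := GaussianFourier.integral_cexp_neg_mul_sq_norm_add hs' Complex.I z
    simp_rw [mul_assoc, integral_const_mul]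
    have h2 : ∀ w : ℂ, Complex.exp (Complex.I * (inner ℝ z w : ℝ)) *
        (Real.exp (-s * ‖w‖ ^ 2) : ℝ) =
        Complex.exp (-(s : ℂ) * ‖w‖ ^ 2 + Complex.I * (inner ℝ z w : ℝ)) := by
      intro w
      push_cast
      rw [add_comm, Complex.exp_add]
    simp_rw [h2, h]
    simp
    ring_nf
  simp_rw [key]
  rw [integral_complex_ofReal, integral_const_mul]

/-- On `0 < |z| ≤ √s` the integrand is at least `s^{-β/2} e^{-1/4}`, and that disc has area `π s`. -/
theorem gaussian_lower_bound {β s : ℝ} (hβ0 : 0 < β) (hβ : β < 1) (hs : 0 < s) (hs1 : s ≤ 1) :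
    Real.pi * s * (s ^ (-(β / 2)) * Real.exp (-(1 / 4))) ≤
      ∫ z in Metric.closedBall (0 : ℂ) 1, ‖z‖ ^ (-β) * Real.exp (-‖z‖ ^ 2 / (4 * s)) := by
  have hint : IntegrableOn (fun z : ℂ => ‖z‖ ^ (-β) * Real.exp (-‖z‖ ^ 2 / (4 * s)))
      (Metric.closedBall (0 : ℂ) 1) := by
    refine (integrableOn_rpow_norm hβ).mono' (Measurable.aestronglyMeasurable (by fun_prop)) ?_
    refine Filter.Eventually.of_forall fun z => ?_
    rw [Real.norm_of_nonneg (by positivity)]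
    refine mul_le_of_le_one_right (by positivity) (Real.exp_le_one_iff.2 ?_)
    exact div_nonpos_of_nonpos_of_nonneg (by simp) (by positivity)
  -- The origin is removed because the convention `0 ^ (-β) = 0` breaks the pointwise lower bound.
  have hsub : Metric.closedBall (0 : ℂ) (√s) \ {0} ⊆ Metric.closedBall (0 : ℂ) 1 :=
    Set.sdiff_subset.trans (Metric.closedBall_subset_closedBall (by simpa using hs1))
  have hmeas : MeasurableSet (Metric.closedBall (0 : ℂ) (√s) \ {0}) :=
    measurableSet_closedBall.diff (measurableSet_singleton 0)
  have hvol : volume.real (Metric.closedBall (0 : ℂ) (√s) \ {0}) = Real.pi * s := by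
    rw [measureReal_def, measure_sdiff_null (by simp), Complex.volume_closedBall]
    simp [Real.sq_sqrt hs.le, mul_comm]
  have hvt : volume (Metric.closedBall (0 : ℂ) (√s) \ {0}) ≠ ⊤ :=
    ((measure_mono Set.sdiff_subset).trans_lt measure_closedBall_lt_top).ne
  calc _ = ∫ z in Metric.closedBall (0 : ℂ) (√s) \ {0}, s ^ (-(β / 2)) * Real.exp (-(1 / 4)) := by
        rw [setIntegral_const, hvol, smul_eq_mul]
    _ ≤ ∫ z in Metric.closedBall (0 : ℂ) (√s) \ {0},
          ‖z‖ ^ (-β) * Real.exp (-‖z‖ ^ 2 / (4 * s)) := by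
        refine setIntegral_mono_on (integrableOn_const hvt) (hint.mono_set hsub) hmeas ?_
        rintro z ⟨hz, hz0⟩
        have hz0' : 0 < ‖z‖ := norm_pos_iff.2 hz0
        have hz1 : ‖z‖ ≤ √s := by simpa using hz
        have hz2 : ‖z‖ ^ 2 ≤ s := by
          rw [← Real.sq_sqrt hs.le]; gcongr
        have e : s ^ (-(β / 2)) = (√s) ^ (-β) := by
          rw [Real.sqrt_eq_rpow, ← Real.rpow_mul hs.le]; ring_nf
        rw [e]
        gcongr ?_ * Real.exp ?_
        · exact Real.rpow_le_rpow_of_nonpos hz0' hz1 (by linarith)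
        · rw [le_div_iff₀ (by positivity)]; linarith
    _ ≤ _ := by
        refine setIntegral_mono_set hint (Filter.Eventually.of_forall fun z => ?_)
          hsub.eventuallyLE
        simp only [Pi.zero_apply]; positivity

/-- Polar coordinates turn finiteness with respect to `a da` into integrability over the plane. -/
theorem integrable_coeff_rpow {q β : ℝ}
    (h : ∫⁻ a in Set.Ioi (0 : ℝ), ENNReal.ofReal (‖coeff β a‖ ^ q * a) ≠ ⊤) :
    Integrable (fun w : ℂ => ‖coeff β ‖w‖‖ ^ q) := by
  rw [integrable_fun_norm_addHaar volume (f := fun r : ℝ => ‖coeff β r‖ ^ q)]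
  have hm := measurable_coeff β
  have h1 : IntegrableOn (fun a : ℝ => ‖coeff β a‖ ^ q * a) (Set.Ioi 0) := by
    refine ⟨Measurable.aestronglyMeasurable (by fun_prop), ?_⟩
    rw [hasFiniteIntegral_iff_ofReal]
    · exact h.lt_top
    · filter_upwards [ae_restrict_mem measurableSet_Ioi] with a ha
      have : 0 < a := ha
      simp only [Pi.zero_apply]; positivity
  refine h1.congr_fun (fun a _ => ?_) measurableSet_Ioi
  simp [mul_comm]

/-- Hölder's inequality against the Gaussian, whose `L^p` norm is `(π / (p s))^{1/p}`. -/
theorem gaussian_upper_bound {q p β s : ℝ} (hpq : q.HolderConjugate p) (hs : 0 < s)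
    (h : Integrable (fun w : ℂ => ‖coeff β ‖w‖‖ ^ q)) :
    ‖∫ w : ℂ, coeff β ‖w‖ * (Real.exp (-s * ‖w‖ ^ 2) : ℝ)‖ ≤
      (∫ w : ℂ, ‖coeff β ‖w‖‖ ^ q) ^ (1 / q) * (Real.pi / (p * s)) ^ (1 / p) := by
  have hp := hpq.symm.pos
  have hgp : ∀ w : ℂ, Real.exp (-s * ‖w‖ ^ 2) ^ p = Real.exp (-(p * s) * ‖w‖ ^ 2) := by
    intro w
    rw [← Real.exp_mul]; ring_nf
  have hgint : Integrable (fun w : ℂ => Real.exp (-(p * s) * ‖w‖ ^ 2)) := by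
    have hs' : 0 < ((p * s : ℝ) : ℂ).re := by
      rw [Complex.ofReal_re]; positivity
    have := (GaussianFourier.integrable_cexp_neg_mul_sq_norm_add hs' 0 (0 : ℂ)).norm
    simpa [Complex.norm_exp, ← Complex.ofReal_pow] using this
  have hm := measurable_coeff β
  have hf : MemLp (fun w : ℂ => coeff β ‖w‖) (ENNReal.ofReal q) := by
    rw [← integrable_norm_rpow_iff (Measurable.aestronglyMeasurable (by fun_prop))
      (by simpa using hpq.pos) (by simp), ENNReal.toReal_ofReal hpq.pos.le]
    exact h
  have hg : MemLp (fun w : ℂ => ((Real.exp (-s * ‖w‖ ^ 2) : ℝ) : ℂ)) (ENNReal.ofReal p) := by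
    rw [← integrable_norm_rpow_iff (Measurable.aestronglyMeasurable (by fun_prop))
      (by simpa using hp) (by simp), ENNReal.toReal_ofReal hp.le]
    simpa only [Complex.norm_real, Real.norm_of_nonneg (Real.exp_pos _).le, hgp] using hgint
  have hH := integral_mul_norm_le_Lp_mul_Lq hpq hf hg
  simp only [Complex.norm_real, Real.norm_of_nonneg (Real.exp_pos _).le, hgp] at hH
  rw [GaussianFourier.integral_rexp_neg_mul_sq_norm (by positivity)] at hH
  refine (norm_integral_le_integral_norm _).trans ?_
  simp only [norm_mul, Complex.norm_real, Real.norm_of_nonneg (Real.exp_pos _).le]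
  simpa using hH

theorem lintegral_coeff_rpow_eq_top (q β : ℝ) (hq1 : 1 < q)
    (hβ0 : 0 < β) (hβ1 : 2 - 2 / q < β) (hβ2 : β < 1) :
    ∫⁻ a in Set.Ioi (0 : ℝ), ENNReal.ofReal (‖coeff β a‖ ^ q * a) = ⊤ := by
  by_contra hfin
  have hint := integrable_coeff_rpow hfin
  have hpq : q.HolderConjugate (q.conjExponent) := Real.HolderConjugate.conjExponent hq1
  set p := q.conjExponent with hp_def
  have hp := hpq.symm.pos
  set K := (∫ w : ℂ, ‖coeff β ‖w‖‖ ^ q) ^ (1 / q) with hK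
  have hexp : 0 < β / 2 - 1 / p := by
    have h1 : 1 / p = 1 - 1 / q := by
      have := hpq.inv_add_inv_eq_one
      rw [one_div, one_div]; linarith
    have : 2 / q = 2 * (1 / q) := by ring
    rw [h1]; linarith
  set c := Real.pi ^ 2 * Real.exp (-(1 / 4)) with hc
  set C := K * (Real.pi / p) ^ (1 / p) with hC
  have hc0 : 0 < c := by positivity
  -- Comparing the two bounds for the Gaussian pairing.
  have bound : ∀ s : ℝ, 0 < s → s ≤ 1 → c * s ^ (-(β / 2 - 1 / p)) ≤ C := by
    intro s hs hs1
    have hlow := gaussian_lower_bound hβ0 hβ2 hs hs1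
    have hup := gaussian_upper_bound hpq hs hint
    rw [integral_coeff_mul_gaussian hβ2 hs, Complex.norm_real] at hup
    have h1 := (le_abs_self _).trans hup
    have h2 : Real.pi / s * (Real.pi * s * (s ^ (-(β / 2)) * Real.exp (-(1 / 4)))) ≤
        K * (Real.pi / (p * s)) ^ (1 / p) := (by gcongr : _ ≤ _).trans h1
    have h3 : Real.pi / s * (Real.pi * s * (s ^ (-(β / 2)) * Real.exp (-(1 / 4)))) =
        c * s ^ (-(β / 2)) := by
      rw [hc]; field_simp
    have h4 : (Real.pi / (p * s)) ^ (1 / p) = (Real.pi / p) ^ (1 / p) * s ^ (-(1 / p)) := by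
      rw [← div_div, Real.div_rpow (by positivity) hs.le, Real.rpow_neg hs.le, div_eq_mul_inv]
    rw [h3, h4, ← mul_assoc] at h2
    have h5 : s ^ (-(β / 2 - 1 / p)) = s ^ (-(β / 2)) * s ^ (1 / p) := by
      rw [← Real.rpow_add hs]; ring_nf
    have h6 : s ^ (-(1 / p)) * s ^ (1 / p) = 1 := by
      rw [← Real.rpow_add hs]; simp
    calc c * s ^ (-(β / 2 - 1 / p)) = c * s ^ (-(β / 2)) * s ^ (1 / p) := by rw [h5]; ring
      _ ≤ C * s ^ (-(1 / p)) * s ^ (1 / p) := by gcongr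
      _ = C := by rw [mul_assoc, h6, mul_one]
  have hlim : Filter.Tendsto (fun x : ℝ => x ^ (β / 2 - 1 / p)) Filter.atTop Filter.atTop :=
    tendsto_rpow_atTop hexp
  obtain ⟨x, hx1, hx2⟩ := ((hlim.eventually_gt_atTop (C / c)).and
    (Filter.eventually_ge_atTop 1)).exists
  have hx0 : 0 < x := by linarith
  have := bound x⁻¹ (by positivity) (inv_le_one_of_one_le₀ hx2)
  rw [Real.inv_rpow hx0.le, Real.rpow_neg hx0.le, inv_inv] at this
  rw [div_lt_iff₀ hc0] at hx1
  linarith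

/-- For `q ∈ (1,2)` and `max{2/3, 2 − 2/q} < β < 1`, the `q`-th power of the (absolute value
of the) matrix coefficient `a ↦ ∫_{|z|≤1} |z|^{−β} e^{i a Re z} dz` of the group Fourier
transform on `M(2)` of `f_β(z,e^{iφ}) = χ_{B₁(0)}(z)|z|^{−β}`, integrated against the
Plancherel measure `a da` on `(0,∞)`, is infinite. -/
theorem motionGroup2_fourier_not_Lq (q β : ℝ) (hq1 : 1 < q) (hq2 : q < 2)
    (hβ1 : max (2 / 3) (2 - 2 / q) < β) (hβ2 : β < 1) :
    ∫⁻ a in Set.Ioi (0 : ℝ),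
        ENNReal.ofReal
          (‖∫ z in Metric.closedBall (0 : ℂ) 1,
              ((‖z‖ ^ (-β) : ℝ) : ℂ) * Complex.exp (Complex.I * a * z.re)‖ ^ q * a) = ⊤ := by
  have h := max_lt_iff.1 hβ1
  exact lintegral_coeff_rpow_eq_top q β hq1 (by linarith [h.1]) h.2 hβ2
end
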